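/- There exists an absolute constant C > 0 such that the following holds. Let p be an odd prime, let g, h : 𝔽_p* → 𝔽_p* be arbitrary functions, define f(x,y) = g(x)(h(x)+y) on 𝔽_p* × 𝔽_p*, and set m = μ(g·h), where (g·h)(x) := g(x)h(x). Then for all nonempty finite subsets A, B, C ⊆ 𝔽_p* with |A| ≤ |B| and |A|, |B|, |C| ≤ p^{3/5}, the fourth-order multiplicative energy satisfies E₄^×(B,C) = Σ_x r_{B/C}(x)⁴ ≤ C · m⁴ · min{ |f(A,B)|³|C|²/|A| , |f(A,B)|²|C|³/|A| } · log(2|A|). -/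

import Mathlib

open Finset Pointwise

/-- `mu g` is `max_{t ∈ 𝔽_p*} |{x ∈ 𝔽_p* : g x = t}|`. -/
def mu {p : ℕ} [NeZero p] (g : ZMod p → ZMod p) : ℕ :=
  Finset.sup (Finset.univ.filter fun t : ZMod p => t ≠ 0)
    (fun t => (Finset.univ.filter fun x : ZMod p => x ≠ 0 ∧ g x = t).card)

/-- `rDiv B C x` is the number of ways to write `x = b * c⁻¹` with `b ∈ B`, `c ∈ C`. -/
def rDiv {p : ℕ} (B C : Finset (ZMod p)) (x : ZMod p) : ℕ :=
  ((B ×ˢ C).filter fun bc => bc.1 * bc.2⁻¹ = x).card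

/-- Fourth-order multiplicative energy `E₄^×(B,C) = Σ_{x ∈ 𝔽_p*} r_{B/C}(x)^4`. -/
def E4mul {p : ℕ} [NeZero p] (B C : Finset (ZMod p)) : ℕ :=
  ∑ x ∈ Finset.univ.filter (fun x : ZMod p => x ≠ 0), (rDiv B C x) ^ 4

/-- Chain rule for derivations. -/
theorem chain_rule {K R : Type*} [Field K] [CommRing R] [Algebra K R] (D : Derivation K R R)
    (σ : Fin 3 → R) (f : MvPolynomial (Fin 3) K) :
    D (MvPolynomial.aeval σ f) =
      ∑ i, MvPolynomial.aeval σ (MvPolynomial.pderiv i f) * D (σ i) := by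
  induction f using MvPolynomial.induction_on with
  | C a => simp
  | add p q hp hq => simp only [map_add, hp, hq, add_mul, Finset.sum_add_distrib]
  | mul_X p n hp =>
    simp only [map_mul, MvPolynomial.aeval_X, Derivation.leibniz, smul_eq_mul, hp, map_add,
      MvPolynomial.pderiv_X]
    simp only [Fin.sum_univ_three]
    fin_cases n <;> simp [Pi.single_apply] <;> ring

theorem pderiv_totalDegree_lt {K : Type*} [Field K] (i : Fin 3) (f : MvPolynomial (Fin 3) K)
    (h : MvPolynomial.pderiv i f ≠ 0) :
    (MvPolynomial.pderiv i f).totalDegree + 1 ≤ f.totalDegree := by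
  obtain ⟨m, hm, hm2⟩ := Finset.exists_mem_eq_sup _ (MvPolynomial.support_nonempty.2 h)
    (fun s : Fin 3 →₀ ℕ => s.sum fun _ e => e)
  have h1 : m + Finsupp.single i 1 ∈ f.support := by
    rw [MvPolynomial.mem_support_iff] at hm ⊢
    rw [MvPolynomial.coeff_pderiv] at hm
    exact left_ne_zero_of_mul hm
  have h2 := MvPolynomial.le_totalDegree h1
  rw [MvPolynomial.totalDegree, hm2]
  rw [Finsupp.sum_add_index' (by simp) (by simp)] at h2
  simpa using h2

theorem pderiv_totalDegree_le {K : Type*} [Field K] (i : Fin 3) (f : MvPolynomial (Fin 3) K) :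
    (MvPolynomial.pderiv i f).totalDegree ≤ f.totalDegree := by
  by_cases h : MvPolynomial.pderiv i f = 0
  · simp [h]
  · have := pderiv_totalDegree_lt i f h
    omega

/-- vanishing to order `n` at the origin -/
def VanOrd {K : Type*} [Field K] (n : ℕ) (G : MvPolynomial (Fin 2) K) : Prop :=
  ∀ m : Fin 2 →₀ ℕ, m 0 + m 1 < n → G.coeff m = 0

theorem VanOrd.mul {K : Type*} [Field K] {n : ℕ} {G : MvPolynomial (Fin 2) K} (hG : VanOrd n G)
    (A : MvPolynomial (Fin 2) K) : VanOrd n (A * G) := by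
  intro m hm
  classical
  rw [MvPolynomial.coeff_mul]
  refine Finset.sum_eq_zero fun x hx => ?_
  rw [Finset.HasAntidiagonal.mem_antidiagonal] at hx
  rw [hG x.2, mul_zero]
  have h0 := DFunLike.congr_fun hx 0
  have h1 := DFunLike.congr_fun hx 1
  simp only [Finsupp.add_apply] at h0 h1
  omega

theorem VanOrd.coeff_mul {K : Type*} [Field K] {n : ℕ} {G : MvPolynomial (Fin 2) K}
    (hG : VanOrd n G) (A : MvPolynomial (Fin 2) K) (m : Fin 2 →₀ ℕ) (hm : m 0 + m 1 = n) :
    (A * G).coeff m = A.coeff 0 * G.coeff m := by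
  classical
  rw [MvPolynomial.coeff_mul]
  rw [Finset.sum_eq_single (0, m)]
  · intro x hx hne
    rw [Finset.HasAntidiagonal.mem_antidiagonal] at hx
    have h0 := DFunLike.congr_fun hx 0
    have h1 := DFunLike.congr_fun hx 1
    simp only [Finsupp.add_apply] at h0 h1
    by_cases hlt : x.2 0 + x.2 1 < n
    · rw [hG _ hlt, mul_zero]
    · exfalso
      apply hne
      have e : x.1 = 0 := by
        ext i
        fin_cases i
        · simp; omega
        · simp; omega
      rw [e, zero_add] at hx
      exact Prod.ext e hx
  · intro h
    simp at h

theorem local_ode_aux {K : Type*} [Field K] (p : ℕ) [CharP K p] {n : ℕ}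
    {G U a b : MvPolynomial (Fin 2) K} (i : Fin 2) (hG : VanOrd n G)
    (hU : U.coeff 0 ≠ 0)
    (h : U * MvPolynomial.pderiv i (MvPolynomial.pderiv i G) = a * G + b * MvPolynomial.pderiv i G)
    (m : Fin 2 →₀ ℕ) (hm : m 0 + m 1 = n) (hmi : 2 ≤ m i) (hmp : m i < p) :
    G.coeff m = 0 := by
  obtain ⟨m', rfl⟩ : ∃ m', m = m' + Finsupp.single i 1 + Finsupp.single i 1 := by
    refine ⟨m - Finsupp.single i 1 - Finsupp.single i 1, ?_⟩
    ext j
    by_cases hj : j = i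
    · subst hj; simp; omega
    · simp [Finsupp.single_apply, Ne.symm hj]
  have hmm : m' 0 + m' 1 + 2 = n := by
    rw [← hm]
    fin_cases i <;> simp <;> omega
  simp only [Finsupp.add_apply, Finsupp.single_eq_same] at hmp
  have hd1 : VanOrd (n - 1) (MvPolynomial.pderiv i G) := by
    intro k hk
    rw [MvPolynomial.coeff_pderiv, hG, zero_mul]
    fin_cases i <;> simp <;> omega
  have hd2 : VanOrd (n - 2) (MvPolynomial.pderiv i (MvPolynomial.pderiv i G)) := by
    intro k hk
    rw [MvPolynomial.coeff_pderiv, hd1, zero_mul]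
    fin_cases i <;> simp <;> omega
  have hc := congrArg (MvPolynomial.coeff m') h
  rw [hd2.coeff_mul _ _ (by omega), MvPolynomial.coeff_add, hG.mul a m' (by omega),
    hd1.mul b m' (by omega), MvPolynomial.coeff_pderiv, MvPolynomial.coeff_pderiv] at hc
  have c1 : ((m' i : K) + 1) ≠ 0 := by
    have : ((m' i + 1 : ℕ) : K) ≠ 0 := by
      rw [Ne, CharP.cast_eq_zero_iff K p]
      exact fun hd => by have := Nat.le_of_dvd (by omega) hd; omega
    simpa using this
  have c2 : (((m' + Finsupp.single i 1 : Fin 2 →₀ ℕ) i : ℕ) : K) + 1 ≠ 0 := by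
    have : ((m' i + 1 + 1 : ℕ) : K) ≠ 0 := by
      rw [Ne, CharP.cast_eq_zero_iff K p]
      exact fun hd => by have := Nat.le_of_dvd (by omega) hd; omega
    simpa using this
  simp only [add_zero] at hc
  rcases mul_eq_zero.1 hc with h1 | h1
  · exact absurd h1 hU
  · rcases mul_eq_zero.1 h1 with h1 | h1
    · rcases mul_eq_zero.1 h1 with h1 | h1
      · exact h1
      · exact absurd h1 c2
    · exact absurd h1 c1

theorem local_ode {K : Type*} [Field K] (p : ℕ) [CharP K p]
    {G U a b a' b' : MvPolynomial (Fin 2) K}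
    (hU : U.coeff 0 ≠ 0)
    (h0 : U * MvPolynomial.pderiv 0 (MvPolynomial.pderiv 0 G) = a * G + b * MvPolynomial.pderiv 0 G)
    (h1 : U * MvPolynomial.pderiv 1 (MvPolynomial.pderiv 1 G) = a' * G + b' * MvPolynomial.pderiv 1 G)
    (hd0 : G.degreeOf 0 < p) (hd1 : G.degreeOf 1 < p)
    (c00 : G.coeff 0 = 0) (c10 : G.coeff (Finsupp.single 0 1) = 0)
    (c01 : G.coeff (Finsupp.single 1 1) = 0)
    (c11 : G.coeff (Finsupp.single 0 1 + Finsupp.single 1 1) = 0) : G = 0 := by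
  have key : ∀ n, VanOrd n G := by
    intro n
    induction n with
    | zero => intro m hm; omega
    | succ n ih =>
      intro m hm
      by_cases hlt : m 0 + m 1 < n
      · exact ih m hlt
      by_contra hne
      have hs : m ∈ G.support := MvPolynomial.mem_support_iff.2 hne
      have e0 := MvPolynomial.monomial_le_degreeOf 0 hs
      have e1 := MvPolynomial.monomial_le_degreeOf 1 hs
      apply hne
      by_cases i0 : 2 ≤ m 0
      · exact local_ode_aux p 0 ih hU h0 m (by omega) i0 (by omega)
      by_cases i1 : 2 ≤ m 1
      · exact local_ode_aux p 1 ih hU h1 m (by omega) i1 (by omega)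
      have hm0 : m 0 = 0 ∨ m 0 = 1 := by omega
      have hm1 : m 1 = 0 ∨ m 1 = 1 := by omega
      have hmm : m = Finsupp.single 0 (m 0) + Finsupp.single 1 (m 1) := by
        ext i; fin_cases i <;> simp
      rcases hm0 with hm0 | hm0 <;> rcases hm1 with hm1 | hm1 <;> rw [hmm, hm0, hm1] <;>
        simp [c00, c10, c01, c11]
  ext m
  rw [key (m 0 + m 1 + 1) m (by omega)]
  simp

theorem totalDegree_coeff_fse {K : Type*} [Field K] (f : MvPolynomial (Fin 3) K) (i : ℕ) :
    ((MvPolynomial.finSuccEquiv K 2 f).coeff i).totalDegree ≤ f.totalDegree := by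
  by_cases h : (MvPolynomial.finSuccEquiv K 2 f).coeff i = 0
  · rw [h]; simp
  · have := MvPolynomial.totalDegree_coeff_finSuccEquiv_add_le f i h
    omega

theorem resultant_totalDegree_le {K : Type*} [Field K]
    (F G : Polynomial (MvPolynomial (Fin 2) K)) (a b m n : ℕ)
    (hF : ∀ i, (F.coeff i).totalDegree ≤ a) (hG : ∀ i, (G.coeff i).totalDegree ≤ b) :
    (Polynomial.resultant F G m n).totalDegree ≤ m * b + n * a := by
  unfold Polynomial.resultant
  rw [Matrix.det_apply]
  apply MvPolynomial.totalDegree_finsetSum_le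
  intro σ _
  refine (MvPolynomial.totalDegree_smul_le _ _).trans ?_
  refine (MvPolynomial.totalDegree_finsetProd _ _).trans ?_
  rw [Fin.sum_univ_add]
  have h1 : ∀ j : Fin m, ((F.sylvester G m n) (σ (Fin.castAdd n j)) (Fin.castAdd n j)).totalDegree ≤ b := by
    intro j
    simp only [Polynomial.sylvester, Matrix.of_apply, Fin.addCases_left]
    split_ifs
    · exact hG _
    · simp
  have h2 : ∀ j : Fin n, ((F.sylvester G m n) (σ (Fin.natAdd m j)) (Fin.natAdd m j)).totalDegree ≤ a := by
    intro j
    simp only [Polynomial.sylvester, Matrix.of_apply, Fin.addCases_right]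
    split_ifs
    · exact hF _
    · simp
  refine add_le_add ((Finset.sum_le_sum fun j _ => h1 j).trans ?_)
    ((Finset.sum_le_sum fun j _ => h2 j).trans ?_) <;> simp

/-- A weak form of Bezout's theorem. -/
theorem bezout_proj {K : Type*} [Field K] (f H : MvPolynomial (Fin 3) K)
    (hf : Irreducible f) (hd : 0 < f.degreeOf 0) (hH : ¬ f ∣ H) :
    ∃ R : MvPolynomial (Fin 2) K, R ≠ 0 ∧ R.totalDegree ≤ 2 * f.totalDegree * H.totalDegree ∧
      ∀ (z : K) (w : Fin 2 → K), MvPolynomial.eval (Fin.cons z w) f = 0 →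
        MvPolynomial.eval (Fin.cons z w) H = 0 → MvPolynomial.eval w R = 0 := by
  set e := MvPolynomial.finSuccEquiv K 2 with he
  have hfi : Irreducible (e f) := (MulEquiv.irreducible_iff e).2 hf
  have hnd : (e f).natDegree = f.degreeOf 0 := MvPolynomial.natDegree_finSuccEquiv f
  have hnd2 : (e H).natDegree = H.degreeOf 0 := MvPolynomial.natDegree_finSuccEquiv H
  have hprim := hfi.isPrimitive (by omega)
  let L := FractionRing (MvPolynomial (Fin 2) K)
  have hinj : Function.Injective (algebraMap (MvPolynomial (Fin 2) K) L) := IsFractionRing.injective _ _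
  let _ : NormalizedGCDMonoid (MvPolynomial (Fin 2) K) := Classical.choice inferInstance
  have hfi' := (hprim.irreducible_iff_irreducible_map_fraction_map (K := L)).1 hfi
  have hndvd : ¬ (e f).map (algebraMap _ L) ∣ (e H).map (algebraMap _ L) := by
    rw [← hprim.dvd_iff_fraction_map_dvd_fraction_map L]
    intro h
    exact hH ((map_dvd_iff e).1 h)
  have hcop : IsCoprime ((e f).map (algebraMap _ L)) ((e H).map (algebraMap _ L)) :=
    (hfi'.coprime_iff_not_dvd).2 hndvd
  refine ⟨Polynomial.resultant (e f) (e H), ?_, ?_, ?_⟩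
  · intro h0
    have h1 := Polynomial.resultant_map_map (e f) (e H) (e f).natDegree (e H).natDegree (algebraMap _ L)
    rw [h0, map_zero] at h1
    have h2 : Polynomial.resultant ((e f).map (algebraMap _ L)) ((e H).map (algebraMap _ L)) = 0 := by
      rw [Polynomial.natDegree_map_eq_of_injective hinj, Polynomial.natDegree_map_eq_of_injective hinj]
      exact h1
    rw [Polynomial.resultant_eq_zero_iff] at h2
    exact h2.2 hcop
  · refine (resultant_totalDegree_le (e f) (e H) f.totalDegree H.totalDegree _ _
      (totalDegree_coeff_fse f) (totalDegree_coeff_fse H)).trans ?_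
    rw [hnd, hnd2]
    have h1 := MvPolynomial.degreeOf_le_totalDegree f 0
    have h2 := MvPolynomial.degreeOf_le_totalDegree H 0
    nlinarith
  · intro z w h1 h2
    obtain ⟨P, Q, -, -, hPQ⟩ := Polynomial.exists_mul_add_mul_eq_C_resultant (e f) (e H) le_rfl le_rfl
      (Or.inl (by omega))
    rw [MvPolynomial.eval_eq_eval_mv_eval'] at h1 h2
    have := congrArg (fun q => Polynomial.eval z (Polynomial.map (MvPolynomial.eval w) q)) hPQ
    simp only [Polynomial.map_add, Polynomial.map_mul, Polynomial.eval_add, Polynomial.eval_mul,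
      Polynomial.map_C, Polynomial.eval_C] at this
    rw [← he] at h1 h2
    rw [h1, h2] at this
    simpa using this.symm

/-- A nonzero bivariate polynomial vanishes on few parallel lines. -/
theorem lines_count {K : Type*} [Field K] [Infinite K] (R : MvPolynomial (Fin 2) K) (hR : R ≠ 0)
    (s : Fin 2) (T : Finset K)
    (h : ∀ w : Fin 2 → K, w s ∈ T → MvPolynomial.eval w R = 0) : T.card ≤ R.totalDegree := by
  classical
  obtain ⟨w, hw⟩ : ∃ w, MvPolynomial.eval w R ≠ 0 := by
    by_contra hcon
    push Not at hcon
    exact hR (MvPolynomial.funext (by simpa using hcon))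
  let σ : Fin 2 → Polynomial K := fun i => if i = s then Polynomial.X else Polynomial.C (w i)
  have hev : ∀ x, Polynomial.eval x (MvPolynomial.aeval σ R) =
      MvPolynomial.eval (Function.update w s x) R := by
    intro x
    have : (Polynomial.evalRingHom x).comp (MvPolynomial.aeval σ : MvPolynomial (Fin 2) K →ₐ[K] Polynomial K).toRingHom
        = MvPolynomial.eval (Function.update w s x) := by
      apply MvPolynomial.ringHom_ext
      · intro r; simp
      · intro i
        by_cases hi : i = s
        · subst hi; simp [σ]
        · simp [σ, hi]
    exact congrArg (fun φ => φ R) this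
  have hne : MvPolynomial.aeval σ R ≠ 0 := by
    intro h0
    apply hw
    have := hev (w s)
    rw [h0] at this
    simpa using this.symm
  have hdeg : (MvPolynomial.aeval σ R).natDegree ≤ R.totalDegree * 1 := by
    apply MvPolynomial.aeval_natDegree_le _ le_rfl
    intro i
    simp only [σ]
    split_ifs <;> simp
  have hsub : T ⊆ (MvPolynomial.aeval σ R).roots.toFinset := by
    intro x hx
    rw [Multiset.mem_toFinset, Polynomial.mem_roots hne, Polynomial.IsRoot, hev]
    apply h
    simpa using hx
  calc T.card ≤ _ := Finset.card_le_card hsub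
    _ ≤ _ := Multiset.toFinset_card_le _
    _ ≤ _ := Polynomial.card_roots' _
    _ ≤ _ := by omega

/-- The flex polynomial. -/
noncomputable def flexP {K : Type*} [Field K] (v : Fin 3) (f : MvPolynomial (Fin 3) K) :
    MvPolynomial (Fin 3) K :=
  MvPolynomial.pderiv v (MvPolynomial.pderiv v f) * (MvPolynomial.pderiv 0 f) ^ 2
  - (MvPolynomial.pderiv 0 (MvPolynomial.pderiv v f) + MvPolynomial.pderiv v (MvPolynomial.pderiv 0 f))
      * MvPolynomial.pderiv v f * MvPolynomial.pderiv 0 f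
  + MvPolynomial.pderiv 0 (MvPolynomial.pderiv 0 f) * (MvPolynomial.pderiv v f) ^ 2

theorem flexP_totalDegree {K : Type*} [Field K] (v : Fin 3) (f : MvPolynomial (Fin 3) K) :
    (flexP v f).totalDegree ≤ 3 * f.totalDegree := by
  have h1 := fun i => pderiv_totalDegree_le i f
  have h2 : ∀ i j, (MvPolynomial.pderiv i (MvPolynomial.pderiv j f)).totalDegree ≤ f.totalDegree :=
    fun i j => (pderiv_totalDegree_le i _).trans (h1 j)
  have hsq : ∀ i, ((MvPolynomial.pderiv i f) ^ 2).totalDegree ≤ 2 * f.totalDegree := fun i =>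
    (MvPolynomial.totalDegree_pow _ _).trans (Nat.mul_le_mul_left _ (h1 i))
  unfold flexP
  refine (MvPolynomial.totalDegree_add _ _).trans (max_le ?_ ?_)
  · refine (MvPolynomial.totalDegree_sub _ _).trans (max_le ?_ ?_)
    · refine (MvPolynomial.totalDegree_mul _ _).trans ?_
      have := h2 v v
      have := hsq 0
      omega
    · refine (MvPolynomial.totalDegree_mul _ _).trans ?_
      have := h1 0
      have := (MvPolynomial.totalDegree_mul (MvPolynomial.pderiv 0 (MvPolynomial.pderiv v f) + MvPolynomial.pderiv v (MvPolynomial.pderiv 0 f)) (MvPolynomial.pderiv v f))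
      have := MvPolynomial.totalDegree_add (MvPolynomial.pderiv 0 (MvPolynomial.pderiv v f)) (MvPolynomial.pderiv v (MvPolynomial.pderiv 0 f))
      have := h2 0 v
      have := h2 v 0
      have := h1 v
      omega
  · refine (MvPolynomial.totalDegree_mul _ _).trans ?_
    have := h2 0 0
    have := hsq v
    omega

theorem flex_identity {K R : Type*} [Field K] [CommRing R] [Algebra K R] (D : Derivation K R R)
    (σ : Fin 3 → R) (κ : R) (s : Fin 2) (h0 : D (σ 0) = κ) (hκ : D κ = 0)
    (hv : ∀ k : Fin 2, D (σ k.succ) = if k = s then 0 else 1) (f : MvPolynomial (Fin 3) K) :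
    ∃ b, MvPolynomial.aeval σ (flexP (1 - s).succ f) =
      (MvPolynomial.aeval σ (MvPolynomial.pderiv 0 f)) ^ 2 * D (D (MvPolynomial.aeval σ f))
        - b * D (MvPolynomial.aeval σ f) := by
  have key : ∀ g : MvPolynomial (Fin 3) K, D (MvPolynomial.aeval σ g) =
      MvPolynomial.aeval σ (MvPolynomial.pderiv 0 g) * κ +
      MvPolynomial.aeval σ (MvPolynomial.pderiv (1 - s).succ g) := by
    intro g
    rw [chain_rule]
    rw [Fin.sum_univ_succ, Fin.sum_univ_two, h0, hv, hv]
    fin_cases s <;> simp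
  set v := (1 - s).succ
  refine ⟨MvPolynomial.aeval σ (MvPolynomial.pderiv 0 f) * (MvPolynomial.aeval σ (MvPolynomial.pderiv 0 (MvPolynomial.pderiv v f)) + MvPolynomial.aeval σ (MvPolynomial.pderiv v (MvPolynomial.pderiv 0 f)))
    + 2 * κ * MvPolynomial.aeval σ (MvPolynomial.pderiv 0 f) * MvPolynomial.aeval σ (MvPolynomial.pderiv 0 (MvPolynomial.pderiv 0 f))
    - (MvPolynomial.aeval σ (MvPolynomial.pderiv 0 f) * κ + MvPolynomial.aeval σ (MvPolynomial.pderiv v f)) * MvPolynomial.aeval σ (MvPolynomial.pderiv 0 (MvPolynomial.pderiv 0 f)), ?_⟩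
  rw [key f, map_add, Derivation.leibniz, hκ, key, key]
  simp only [flexP, map_add, map_sub, map_mul, map_pow, smul_eq_mul]
  ring

/-- Point with parameter `x` on the line with data `i = (t, a, b)` and fixed coordinate `s`. -/
def ln {K : Type*} [Field K] (s : Fin 2) (i : K × K × K) (x : K) : Fin 3 → K :=
  Fin.cons (i.2.1 + i.2.2 * x) (fun k => if k = s then i.1 else x)

/-- The line with data `i` lies on the surface `f = 0`. -/
def OnL {K : Type*} [Field K] (s : Fin 2) (f : MvPolynomial (Fin 3) K) (i : K × K × K) : Prop :=
  ∀ x, MvPolynomial.eval (ln s i x) f = 0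

/-- Polynomial parametrization of a line. -/
noncomputable def lnP {K : Type*} [Field K] (s : Fin 2) (i : K × K × K) : Fin 3 → Polynomial K :=
  Fin.cons (Polynomial.C i.2.1 + Polynomial.C i.2.2 * Polynomial.X)
    (fun k => if k = s then Polynomial.C i.1 else Polynomial.X)

theorem lnP_eval {K : Type*} [Field K] (s : Fin 2) (i : K × K × K) (f : MvPolynomial (Fin 3) K) (x : K) :
    Polynomial.eval x (MvPolynomial.aeval (lnP s i) f) = MvPolynomial.eval (ln s i x) f := by
  have : (Polynomial.evalRingHom x).comp
      (MvPolynomial.aeval (lnP s i) : MvPolynomial (Fin 3) K →ₐ[K] Polynomial K).toRingHom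
      = MvPolynomial.eval (ln s i x) := by
    apply MvPolynomial.ringHom_ext
    · intro r; simp
    · intro k
      refine Fin.cases ?_ (fun k => ?_) k
      · simp [lnP, ln]
      · by_cases hk : k = s <;> simp [lnP, ln, hk]
  exact congrArg (fun φ => φ f) this

theorem onL_iff {K : Type*} [Field K] [Infinite K] (s : Fin 2) (f : MvPolynomial (Fin 3) K) (i : K × K × K) :
    OnL s f i ↔ MvPolynomial.aeval (lnP s i) f = 0 := by
  constructor
  · intro h
    apply Polynomial.funext
    intro x
    rw [lnP_eval, h x]; simp
  · intro h x
    rw [← lnP_eval, h]; simp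

theorem lnP_natDegree {K : Type*} [Field K] (s : Fin 2) (i : K × K × K) (k : Fin 3) :
    (lnP s i k).natDegree ≤ 1 := by
  refine Fin.cases ?_ (fun k => ?_) k
  · simp only [lnP, Fin.cons_zero]
    compute_degree
  · simp only [lnP, Fin.cons_succ]
    split_ifs <;> simp

/-- A line with more than `deg f` points on `f = 0` is contained in it. -/
theorem onL_of_many {K : Type*} [Field K] [Infinite K] (s : Fin 2) (f : MvPolynomial (Fin 3) K)
    (i : K × K × K) (T : Finset K) (hT : f.totalDegree < T.card)
    (h : ∀ x ∈ T, MvPolynomial.eval (ln s i x) f = 0) : OnL s f i := by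
  classical
  rw [onL_iff]
  by_contra hne
  have hdeg := MvPolynomial.aeval_natDegree_le f le_rfl (lnP s i) (lnP_natDegree s i)
  have hsub : T ⊆ (MvPolynomial.aeval (lnP s i) f).roots.toFinset := by
    intro x hx
    rw [Multiset.mem_toFinset, Polynomial.mem_roots hne, Polynomial.IsRoot, lnP_eval]
    exact h x hx
  have h1 := Finset.card_le_card hsub
  have h2 := Multiset.toFinset_card_le (MvPolynomial.aeval (lnP s i) f).roots
  have h3 := Polynomial.card_roots' (MvPolynomial.aeval (lnP s i) f)
  omega

theorem flex_onL {K : Type*} [Field K] [Infinite K] (s : Fin 2) (f : MvPolynomial (Fin 3) K) (i : K × K × K)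
    (h : OnL s f i) : OnL s (flexP (1 - s).succ f) i := by
  rw [onL_iff] at h ⊢
  obtain ⟨b, hb⟩ := flex_identity (Polynomial.derivative' : Derivation K (Polynomial K) (Polynomial K))
    (lnP s i) (Polynomial.C i.2.2) s (by simp [lnP, Polynomial.derivative']) (by simp [Polynomial.derivative'])
    (by intro k; by_cases hk : k = s <;> simp [lnP, hk, Polynomial.derivative']) f
  rw [hb, h]
  simp

theorem ln_eq_cons {K : Type*} [Field K] (s : Fin 2) (i : K × K × K) (w : Fin 2 → K) (hw : w s = i.1) :
    ln s i (w (1 - s)) = Fin.cons (i.2.1 + i.2.2 * w (1 - s)) w := by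
  unfold ln
  congr 1
  ext k
  fin_cases s <;> fin_cases k <;> simp_all

theorem bezout_lines {K : Type*} [Field K] [Infinite K] (s : Fin 2) (f H : MvPolynomial (Fin 3) K)
    (hf : Irreducible f) (hd : 0 < f.degreeOf 0) (hH : ¬ f ∣ H) (I : Finset (K × K × K))
    (hinj : Set.InjOn Prod.fst (I : Set (K × K × K))) (h1 : ∀ i ∈ I, OnL s f i) (h2 : ∀ i ∈ I, OnL s H i) :
    I.card ≤ 2 * f.totalDegree * H.totalDegree := by
  classical
  obtain ⟨R, hR0, hRd, hR⟩ := bezout_proj f H hf hd hH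
  rw [← Finset.card_image_of_injOn hinj]
  refine (lines_count R hR0 s _ ?_).trans hRd
  intro w hw
  rw [Finset.mem_image] at hw
  obtain ⟨i, hi, hiw⟩ := hw
  have e := ln_eq_cons s i w hiw.symm
  apply hR (i.2.1 + i.2.2 * w (1 - s)) w
  · rw [← e]; exact h1 i hi _
  · rw [← e]; exact h2 i hi _

theorem pderiv_ne_zero {K : Type*} [Field K] (p : ℕ) [CharP K p] (f : MvPolynomial (Fin 3) K)
    (h0 : 0 < f.degreeOf 0) (hp : f.degreeOf 0 < p) : MvPolynomial.pderiv 0 f ≠ 0 := by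
  have hf : f ≠ 0 := by rintro rfl; simp at h0
  obtain ⟨m, hm, hm2⟩ := Finset.exists_mem_eq_sup _ (MvPolynomial.support_nonempty.2 hf)
    (fun s : Fin 3 →₀ ℕ => s 0)
  rw [← MvPolynomial.degreeOf_eq_sup] at hm2
  intro h
  have hc := MvPolynomial.coeff_pderiv (i := 0) f (m - Finsupp.single 0 1)
  have hmm : m - Finsupp.single 0 1 + Finsupp.single 0 1 = m := by
    ext k
    by_cases hk : k = 0
    · subst hk; simp; omega
    · simp [Finsupp.single_apply, Ne.symm hk]
  rw [h, hmm] at hc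
  simp only [MvPolynomial.coeff_zero] at hc
  rcases mul_eq_zero.1 hc.symm with h1 | h1
  · exact MvPolynomial.mem_support_iff.1 hm h1
  · have : ((m 0 : ℕ) : K) = 0 := by
      rw [← h1]
      simp only [Finsupp.coe_tsub, Pi.sub_apply, Finsupp.single_eq_same]
      rw [Nat.cast_sub (by omega)]; simp
    rw [CharP.cast_eq_zero_iff K p] at this
    have := Nat.le_of_dvd (by omega) this
    omega

theorem degreeOf_aeval_le {K : Type*} [Field K] (σ : Fin 3 → MvPolynomial (Fin 2) K) (i : Fin 2)
    (h : ∀ k, (σ k).degreeOf i ≤ 1) (f : MvPolynomial (Fin 3) K) :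
    (MvPolynomial.aeval σ f).degreeOf i ≤ f.totalDegree := by
  rw [MvPolynomial.aeval_def, MvPolynomial.eval₂_eq]
  refine (MvPolynomial.degreeOf_sum_le _ _ _).trans (Finset.sup_le fun m hm => ?_)
  refine (MvPolynomial.degreeOf_C_mul_le _ _ _).trans ?_
  refine (MvPolynomial.degreeOf_prod_le _ _ _).trans ?_
  refine le_trans (Finset.sum_le_sum fun k _ => ?_) (MvPolynomial.le_totalDegree hm)
  refine (MvPolynomial.degreeOf_pow_le _ _ _).trans ?_
  have := h k
  nlinarith

/-- Bilinear substitution. -/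
noncomputable def bil {K : Type*} [Field K] (z x y β γ δ : K) : Fin 3 → MvPolynomial (Fin 2) K :=
  Fin.cons (MvPolynomial.C z + MvPolynomial.C β * MvPolynomial.X 0 + MvPolynomial.C γ * MvPolynomial.X 1
    + MvPolynomial.C δ * (MvPolynomial.X 0 * MvPolynomial.X 1))
    ![MvPolynomial.C x + MvPolynomial.X 0, MvPolynomial.C y + MvPolynomial.X 1]

theorem bil_eval {K : Type*} [Field K] (z x y β γ δ : K) (f : MvPolynomial (Fin 3) K) (w : Fin 2 → K) :
    MvPolynomial.eval w (MvPolynomial.aeval (bil z x y β γ δ) f) =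
      MvPolynomial.eval (Fin.cons (z + β * w 0 + γ * w 1 + δ * (w 0 * w 1)) ![x + w 0, y + w 1]) f := by
  have : (MvPolynomial.eval w).comp
      (MvPolynomial.aeval (bil z x y β γ δ) : MvPolynomial (Fin 3) K →ₐ[K] MvPolynomial (Fin 2) K).toRingHom
      = MvPolynomial.eval (Fin.cons (z + β * w 0 + γ * w 1 + δ * (w 0 * w 1)) ![x + w 0, y + w 1]) := by
    apply MvPolynomial.ringHom_ext
    · intro r; simp
    · intro k
      fin_cases k <;> simp [bil]
  exact congrArg (fun φ => φ f) this

theorem bil_degree {K : Type*} [Field K] (z x y β γ δ : K) (i : Fin 2) (k : Fin 3) :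
    (bil z x y β γ δ k).degreeOf i ≤ 1 := by
  have hX : ∀ j : Fin 2, (MvPolynomial.X j : MvPolynomial (Fin 2) K).degreeOf i ≤ 1 := by
    intro j; rw [MvPolynomial.degreeOf_X]; split_ifs <;> simp
  have hC : ∀ c : K, (MvPolynomial.C c : MvPolynomial (Fin 2) K).degreeOf i ≤ 1 := by
    intro c; simp [MvPolynomial.degreeOf_C]
  have hadd : ∀ a b : MvPolynomial (Fin 2) K, a.degreeOf i ≤ 1 → b.degreeOf i ≤ 1 → (a + b).degreeOf i ≤ 1 :=
    fun a b ha hb => (MvPolynomial.degreeOf_add_le _ _ _).trans (max_le ha hb)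
  have hmul : ∀ (c : K) (b : MvPolynomial (Fin 2) K), b.degreeOf i ≤ 1 → (MvPolynomial.C c * b).degreeOf i ≤ 1 :=
    fun c b hb => (MvPolynomial.degreeOf_C_mul_le _ _ _).trans hb
  have hXX : ((MvPolynomial.X 0 * MvPolynomial.X 1 : MvPolynomial (Fin 2) K)).degreeOf i ≤ 1 := by
    refine (MvPolynomial.degreeOf_mul_le _ _ _).trans ?_
    rw [MvPolynomial.degreeOf_X, MvPolynomial.degreeOf_X]
    fin_cases i <;> simp
  fin_cases k
  · exact hadd _ _ (hadd _ _ (hadd _ _ (hC _) (hmul _ _ (hX _))) (hmul _ _ (hX _))) (hmul _ _ hXX)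
  · exact hadd _ _ (hC _) (hX _)
  · exact hadd _ _ (hC _) (hX _)

theorem ruled_bilinear {K : Type*} [Field K] [Infinite K] (p : ℕ) [CharP K p] (f : MvPolynomial (Fin 3) K)
    (hf : Irreducible f) (hp : f.totalDegree < p) (hd : 0 < f.degreeOf 0)
    (h1 : f ∣ flexP 1 f) (h2 : f ∣ flexP 2 f) (z x y : K)
    (hP : MvPolynomial.eval (Fin.cons z ![x, y]) f = 0)
    (hZ : MvPolynomial.eval (Fin.cons z ![x, y]) (MvPolynomial.pderiv 0 f) ≠ 0) :
    ∃ β γ δ : K, ∀ w : Fin 2 → K,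
      MvPolynomial.eval (Fin.cons (z + β * (w 0 - x) + γ * (w 1 - y) + δ * ((w 0 - x) * (w 1 - y))) w) f = 0 := by
  set P : Fin 3 → K := Fin.cons z ![x, y] with hPdef
  set fZ := MvPolynomial.eval P (MvPolynomial.pderiv 0 f) with hfZ
  obtain ⟨β, hβ⟩ : ∃ β, MvPolynomial.eval P (MvPolynomial.pderiv 1 f) + fZ * β = 0 :=
    ⟨-(MvPolynomial.eval P (MvPolynomial.pderiv 1 f)) / fZ, by field_simp; ring⟩
  obtain ⟨γ, hγ⟩ : ∃ γ, MvPolynomial.eval P (MvPolynomial.pderiv 2 f) + fZ * γ = 0 :=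
    ⟨-(MvPolynomial.eval P (MvPolynomial.pderiv 2 f)) / fZ, by field_simp; ring⟩
  obtain ⟨δ, hδ⟩ : ∃ δ, MvPolynomial.eval P (MvPolynomial.pderiv 2 (MvPolynomial.pderiv 1 f))
      + MvPolynomial.eval P (MvPolynomial.pderiv 0 (MvPolynomial.pderiv 1 f)) * γ
      + (MvPolynomial.eval P (MvPolynomial.pderiv 2 (MvPolynomial.pderiv 0 f))
      + MvPolynomial.eval P (MvPolynomial.pderiv 0 (MvPolynomial.pderiv 0 f)) * γ) * β + fZ * δ = 0 := by
    set q := MvPolynomial.eval P (MvPolynomial.pderiv 2 (MvPolynomial.pderiv 1 f))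
      + MvPolynomial.eval P (MvPolynomial.pderiv 0 (MvPolynomial.pderiv 1 f)) * γ
      + (MvPolynomial.eval P (MvPolynomial.pderiv 2 (MvPolynomial.pderiv 0 f))
      + MvPolynomial.eval P (MvPolynomial.pderiv 0 (MvPolynomial.pderiv 0 f)) * γ) * β
    exact ⟨- q / fZ, by field_simp; ring⟩
  set σ := bil z x y β γ δ with hσ
  set G := MvPolynomial.aeval σ f with hG
  have ev0 : ∀ g : MvPolynomial (Fin 3) K, MvPolynomial.eval 0 (MvPolynomial.aeval σ g) = MvPolynomial.eval P g := by
    intro g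
    rw [hσ, bil_eval]
    simp [hPdef]
  have cc : ∀ g : MvPolynomial (Fin 2) K, g.coeff 0 = MvPolynomial.eval 0 g := by
    intro g
    rw [← MvPolynomial.constantCoeff_eq]
    exact (congrArg (fun φ => φ g) MvPolynomial.eval_zero).symm
  have D0 : ∀ g : MvPolynomial (Fin 3) K, MvPolynomial.pderiv 0 (MvPolynomial.aeval σ g) =
      MvPolynomial.aeval σ (MvPolynomial.pderiv 0 g) * (MvPolynomial.C β + MvPolynomial.C δ * MvPolynomial.X 1)
      + MvPolynomial.aeval σ (MvPolynomial.pderiv 1 g) := by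
    intro g
    rw [chain_rule, Fin.sum_univ_three]
    simp [σ, bil, MvPolynomial.pderiv_X]
  have D1 : ∀ g : MvPolynomial (Fin 3) K, MvPolynomial.pderiv 1 (MvPolynomial.aeval σ g) =
      MvPolynomial.aeval σ (MvPolynomial.pderiv 0 g) * (MvPolynomial.C γ + MvPolynomial.C δ * MvPolynomial.X 0)
      + MvPolynomial.aeval σ (MvPolynomial.pderiv 2 g) := by
    intro g
    rw [chain_rule, Fin.sum_univ_three]
    simp [σ, bil, MvPolynomial.pderiv_X]
  obtain ⟨q1, hq1⟩ := h1
  obtain ⟨q2, hq2⟩ := h2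
  obtain ⟨b1, hb1⟩ := flex_identity (MvPolynomial.pderiv (R := K) (0 : Fin 2)) σ
    (MvPolynomial.C β + MvPolynomial.C δ * MvPolynomial.X 1) 1
    (by simp [σ, bil, MvPolynomial.pderiv_X]) (by simp [MvPolynomial.pderiv_X])
    (by intro k; fin_cases k <;> simp [σ, bil, MvPolynomial.pderiv_X]) f
  obtain ⟨b2, hb2⟩ := flex_identity (MvPolynomial.pderiv (R := K) (1 : Fin 2)) σ
    (MvPolynomial.C γ + MvPolynomial.C δ * MvPolynomial.X 0) 0
    (by simp [σ, bil, MvPolynomial.pderiv_X]) (by simp [MvPolynomial.pderiv_X])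
    (by intro k; fin_cases k <;> simp [σ, bil, MvPolynomial.pderiv_X]) f
  rw [show ((1 : Fin 2) - 1).succ = (1 : Fin 3) from rfl, hq1, map_mul] at hb1
  rw [show ((1 : Fin 2) - 0).succ = (2 : Fin 3) from rfl, hq2, map_mul] at hb2
  have hG0 : G = 0 := by
    have hc10 : MvPolynomial.eval 0 (MvPolynomial.pderiv 0 G) = 0 := by
      rw [hG, D0]; simp only [map_add, map_mul, ev0, MvPolynomial.eval_C, MvPolynomial.eval_X]
      rw [← hβ]; simp; ring
    have hc01 : MvPolynomial.eval 0 (MvPolynomial.pderiv 1 G) = 0 := by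
      rw [hG, D1]; simp only [map_add, map_mul, ev0, MvPolynomial.eval_C, MvPolynomial.eval_X]
      rw [← hγ]; simp; ring
    have hc11 : MvPolynomial.eval 0 (MvPolynomial.pderiv 1 (MvPolynomial.pderiv 0 G)) = 0 := by
      rw [hG, D0, map_add, Derivation.leibniz, D1, D1]
      simp only [map_add, map_mul, ev0, MvPolynomial.eval_C, MvPolynomial.eval_X, smul_eq_mul, Derivation.leibniz,
        MvPolynomial.pderiv_X, MvPolynomial.pderiv_C]
      rw [← hδ]; simp; ring
    refine local_ode p (U := (MvPolynomial.aeval σ (MvPolynomial.pderiv 0 f)) ^ 2)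
      (a := MvPolynomial.aeval σ q1) (b := b1) (a' := MvPolynomial.aeval σ q2) (b' := b2)
      ?_ ?_ ?_ ?_ ?_ ?_ ?_ ?_ ?_
    · rw [cc, map_pow, ev0]; exact pow_ne_zero 2 hZ
    · linear_combination - hb1
    · linear_combination - hb2
    · exact (degreeOf_aeval_le _ _ (bil_degree _ _ _ _ _ _ _) f).trans_lt hp
    · exact (degreeOf_aeval_le _ _ (bil_degree _ _ _ _ _ _ _) f).trans_lt hp
    · rw [cc, hG, ev0, hP]
    · rw [← cc, MvPolynomial.coeff_pderiv] at hc10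
      simpa using hc10
    · rw [← cc, MvPolynomial.coeff_pderiv] at hc01
      simpa using hc01
    · rw [← cc, MvPolynomial.coeff_pderiv, MvPolynomial.coeff_pderiv] at hc11
      rw [add_comm (Finsupp.single 0 1)]
      simpa using hc11
  refine ⟨β, γ, δ, fun w => ?_⟩
  have := bil_eval z x y β γ δ f ![w 0 - x, w 1 - y]
  rw [← hσ, ← hG, hG0] at this
  simp only [map_zero] at this
  rw [this]
  congr 2
  congr 1
  ext k; fin_cases k <;> simp

theorem trichotomy {K : Type*} [Field K] [Infinite K] (p : ℕ) [CharP K p] (f : MvPolynomial (Fin 3) K)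
    (hf : Irreducible f) (hp : f.totalDegree < p) (I J : Finset (K × K × K))
    (hIi : Set.InjOn Prod.fst (I : Set (K × K × K))) (hJi : Set.InjOn Prod.fst (J : Set (K × K × K)))
    (hI : ∀ i ∈ I, OnL 1 f i) (hJ : ∀ i ∈ J, OnL 0 f i) :
    I.card ≤ 6 * f.totalDegree ^ 2 ∨ J.card ≤ 6 * f.totalDegree ^ 2 ∨
      ∃ α β γ δ : K, ∀ i, OnL 1 f i → i.2.1 = α + γ * i.1 ∧ i.2.2 = β + δ * i.1 := by
  classical
  by_cases hd : f.degreeOf 0 = 0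
  · right; left
    set R := (MvPolynomial.finSuccEquiv K 2 f).coeff 0 with hR
    have hfR : MvPolynomial.finSuccEquiv K 2 f = Polynomial.C R := by
      apply Polynomial.eq_C_of_natDegree_eq_zero
      rw [MvPolynomial.natDegree_finSuccEquiv, hd]
    have hR0 : R ≠ 0 := by
      intro h0
      rw [h0, map_zero] at hfR
      exact hf.ne_zero ((MvPolynomial.finSuccEquiv K 2).injective (by rw [hfR, map_zero]))
    have hc : J.card ≤ R.totalDegree := by
      rw [← Finset.card_image_of_injOn hJi]
      refine lines_count R hR0 0 _ ?_
      intro w hw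
      rw [Finset.mem_image] at hw
      obtain ⟨i, hi, hiw⟩ := hw
      have e := ln_eq_cons 0 i w hiw.symm
      have := hJ i hi (w (1 - 0))
      rw [e, MvPolynomial.eval_eq_eval_mv_eval', hfR] at this
      simpa using this
    have := totalDegree_coeff_fse f 0
    nlinarith [hc, this]
  by_contra hcon
  push Not at hcon
  obtain ⟨h1, h2, h3⟩ := hcon
  have hd' : 0 < f.degreeOf 0 := Nat.pos_of_ne_zero hd
  have e1 : f ∣ flexP 1 f := by
    by_contra hn
    have := bezout_lines 1 f (flexP 1 f) hf hd' hn I hIi hI (fun i hi => flex_onL 1 f i (hI i hi))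
    have := flexP_totalDegree 1 f
    nlinarith
  have e2 : f ∣ flexP 2 f := by
    by_contra hn
    have := bezout_lines 0 f (flexP 2 f) hf hd' hn J hJi hJ (fun i hi => flex_onL 0 f i (hJ i hi))
    have := flexP_totalDegree 2 f
    nlinarith
  have hZ0 := pderiv_ne_zero p f hd' ((MvPolynomial.degreeOf_le_totalDegree f 0).trans_lt hp)
  have hZlt := pderiv_totalDegree_lt 0 f hZ0
  have hZd : ¬ f ∣ MvPolynomial.pderiv 0 f := by
    intro h
    have := MvPolynomial.totalDegree_le_of_dvd_of_isDomain h hZ0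
    omega
  obtain ⟨i, hi, hi2⟩ : ∃ i ∈ I, ¬ OnL 1 (MvPolynomial.pderiv 0 f) i := by
    by_contra hn
    push Not at hn
    have := bezout_lines 1 f _ hf hd' hZd I hIi hI hn
    nlinarith
  unfold OnL at hi2
  push Not at hi2
  obtain ⟨x, hx⟩ := hi2
  have e := ln_eq_cons 1 i ![x, i.1] (by simp)
  simp only [sub_self, Matrix.cons_val_zero] at e
  obtain ⟨β, γ, δ, hB⟩ := ruled_bilinear p f hf hp hd' e1 e2 (i.2.1 + i.2.2 * x) x i.1
    (by rw [← e]; exact hI i hi x) (by rw [← e]; exact hx)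
  set z := i.2.1 + i.2.2 * x
  set y := i.1
  let L : MvPolynomial (Fin 3) K := MvPolynomial.X 0 - (MvPolynomial.C z
    + MvPolynomial.C β * (MvPolynomial.X 1 - MvPolynomial.C x)
    + MvPolynomial.C γ * (MvPolynomial.X 2 - MvPolynomial.C y)
    + MvPolynomial.C δ * ((MvPolynomial.X 1 - MvPolynomial.C x) * (MvPolynomial.X 2 - MvPolynomial.C y)))
  have hLe : ∀ u, MvPolynomial.eval u L = u 0 - (z + β * (u 1 - x) + γ * (u 2 - y) + δ * ((u 1 - x) * (u 2 - y))) := by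
    intro u; simp [L]
  have hfL : f ∣ L := by
    by_contra hn
    obtain ⟨R, hR0, -, hR⟩ := bezout_proj f L hf hd' hn
    apply hR0
    apply MvPolynomial.funext
    intro w
    rw [map_zero]
    refine hR _ w (hB w) ?_
    rw [hLe]
    simp only [Fin.cons_zero]
    rw [show (1 : Fin 3) = Fin.succ 0 from rfl, show (2 : Fin 3) = Fin.succ 1 from rfl]
    simp only [Fin.cons_succ]
    ring
  obtain ⟨Q, hQ⟩ := hfL
  obtain ⟨j, hj, hj2⟩ := h3 (z - β * x - γ * y + δ * x * y) (β - δ * y) (γ - δ * x) δ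
  have hz : ∀ t, j.2.1 + j.2.2 * t - (z + β * (t - x) + γ * (j.1 - y) + δ * ((t - x) * (j.1 - y))) = 0 := by
    intro t
    have h5 : MvPolynomial.eval (ln 1 j t) L = 0 := by rw [hQ, map_mul, hj t, zero_mul]
    rw [hLe] at h5
    exact h5
  have z0 := hz 0
  have z1 := hz 1
  refine hj2 ?_ ?_
  · linear_combination z0
  · linear_combination z1 - z0

theorem multiset_prod_totalDegree {K : Type*} [Field K] (M : Multiset (MvPolynomial (Fin 3) K))
    (h : (0 : MvPolynomial (Fin 3) K) ∉ M) :
    M.prod.totalDegree = (M.map MvPolynomial.totalDegree).sum := by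
  induction M using Multiset.induction_on with
  | empty => simp
  | cons a s ih =>
    rw [Multiset.mem_cons, not_or] at h
    rw [Multiset.prod_cons, Multiset.map_cons, Multiset.sum_cons, ← ih h.2,
      MvPolynomial.totalDegree_mul_of_isDomain (Ne.symm h.1) (Multiset.prod_ne_zero h.2)]

theorem factor_decomp {K : Type*} [Field K] [Infinite K] (P : MvPolynomial (Fin 3) K) (hP : P ≠ 0) :
    ∃ Fs : Finset (MvPolynomial (Fin 3) K), (∀ f ∈ Fs, Irreducible f) ∧
      ∑ f ∈ Fs, f.totalDegree ≤ P.totalDegree ∧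
      ∀ s i, OnL s P i → ∃ f ∈ Fs, OnL s f i := by
  classical
  set M := UniqueFactorizationMonoid.factors P with hM
  have hirr : ∀ f ∈ M, Irreducible f := fun f hf => UniqueFactorizationMonoid.irreducible_of_factor f hf
  have h0 : (0 : MvPolynomial (Fin 3) K) ∉ M := fun h => (hirr 0 h).ne_zero rfl
  have has := UniqueFactorizationMonoid.factors_prod hP
  rw [← hM] at has
  obtain ⟨u, hu⟩ := has
  refine ⟨M.toFinset, fun f hf => hirr f (Multiset.mem_toFinset.1 hf), ?_, ?_⟩
  · have e1 : M.prod.totalDegree ≤ P.totalDegree :=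
      MvPolynomial.totalDegree_le_of_dvd_of_isDomain ⟨u, hu.symm⟩ hP
    rw [multiset_prod_totalDegree M h0] at e1
    refine le_trans ?_ e1
    rw [Finset.sum_multiset_map_count]
    refine Finset.sum_le_sum fun f hf => ?_
    have : 1 ≤ M.count f := Multiset.one_le_count_iff_mem.2 (Multiset.mem_toFinset.1 hf)
    simp only [smul_eq_mul]
    nlinarith
  · intro s i hi
    rw [onL_iff, ← hu, map_mul] at hi
    rcases mul_eq_zero.1 hi with h | h
    · rw [map_multiset_prod, Multiset.prod_eq_zero_iff, Multiset.mem_map] at h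
      obtain ⟨f, hf, hf2⟩ := h
      exact ⟨f, Multiset.mem_toFinset.2 hf, (onL_iff s f i).2 hf2⟩
    · exact absurd h ((u.isUnit.map _).ne_zero)

/-- Incidence relation between two lines. -/
def inc {K : Type*} [Field K] (i j : K × K × K) : Prop :=
  i.2.1 + i.2.2 * j.1 = j.2.1 + j.2.2 * i.1

theorem inc_comm {K : Type*} [Field K] (i j : K × K × K) : inc i j ↔ inc j i := by
  unfold inc; exact eq_comm

theorem ln_inc {K : Type*} [Field K] (s : Fin 2) (i j : K × K × K) (h : inc i j) :
    ln s i j.1 = ln (1 - s) j i.1 := by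
  unfold inc at h
  unfold ln
  rw [h]
  congr 1
  ext k
  fin_cases s <;> fin_cases k <;> simp

theorem few_meet {K : Type*} [Field K] [Infinite K] (s : Fin 2) (f : MvPolynomial (Fin 3) K)
    (i : K × K × K) (J : Finset (K × K × K)) (hJ : Set.InjOn Prod.fst (J : Set (K × K × K)))
    (h : ∀ j ∈ J, OnL (1 - s) f j ∧ inc i j) (hi : ¬ OnL s f i) : J.card ≤ f.totalDegree := by
  classical
  by_contra hcon
  push Not at hcon
  apply hi
  rw [← Finset.card_image_of_injOn hJ] at hcon
  apply onL_of_many s f i _ hcon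
  intro x hx
  rw [Finset.mem_image] at hx
  obtain ⟨j, hj, rfl⟩ := hx
  rw [ln_inc s i j (h j hj).2]
  exact (h j hj).1 i.1

theorem vanish_points {K : Type*} [Field K] (W : Finset (Fin 3 → K)) (D : ℕ) (h : W.card < D ^ 3) :
    ∃ P : MvPolynomial (Fin 3) K, P ≠ 0 ∧ P.totalDegree ≤ 3 * D ∧ ∀ w ∈ W, MvPolynomial.eval w P = 0 := by
  classical
  let mon : (Fin 3 → Fin D) → (Fin 3 →₀ ℕ) := fun e => Finsupp.equivFunOnFinite.symm (fun k => (e k : ℕ))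
  have hmon : Function.Injective mon := by
    intro e e' hee
    ext k
    have := congrArg (fun m : Fin 3 →₀ ℕ => m k) hee
    simpa [mon] using this
  let poly : ((Fin 3 → Fin D) → K) →ₗ[K] MvPolynomial (Fin 3) K :=
    ∑ e, (MvPolynomial.monomial (mon e)).comp (LinearMap.proj e)
  let ev : ((Fin 3 → Fin D) → K) →ₗ[K] (W → K) :=
    LinearMap.pi (fun w => ((MvPolynomial.aeval (w : Fin 3 → K) : MvPolynomial (Fin 3) K →ₐ[K] K).toLinearMap.comp poly))
  have hker : LinearMap.ker ev ≠ ⊥ := by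
    apply LinearMap.ker_ne_bot_of_finrank_lt
    simp only [Module.finrank_fintype_fun_eq_card, Fintype.card_coe, Fintype.card_fun, Fintype.card_fin]
    exact h
  obtain ⟨c, hc, hc0⟩ := (Submodule.ne_bot_iff _).1 hker
  have hpoly : poly c = ∑ e, MvPolynomial.monomial (mon e) (c e) := by
    simp [poly, LinearMap.sum_apply]
  refine ⟨poly c, ?_, ?_, ?_⟩
  · intro h0
    apply hc0
    ext e
    have := congrArg (MvPolynomial.coeff (mon e)) h0
    rw [hpoly, MvPolynomial.coeff_sum] at this
    simp only [MvPolynomial.coeff_monomial, hmon.eq_iff, Finset.sum_ite_eq', Finset.mem_univ, if_true] at this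
    simpa using this
  · rw [hpoly]
    apply MvPolynomial.totalDegree_finsetSum_le
    intro e _
    refine (MvPolynomial.totalDegree_monomial_le _ _).trans ?_
    rw [Finsupp.sum_fintype _ _ (by simp), Fin.sum_univ_three]
    simp only [mon, Finsupp.coe_equivFunOnFinite_symm, id_eq]
    have := (e 0).2
    have := (e 1).2
    have := (e 2).2
    omega
  · intro w hw
    rw [LinearMap.mem_ker] at hc
    have := congrFun hc ⟨w, hw⟩
    simpa [ev, MvPolynomial.aeval_eq_eval] using this

theorem vanish_lines {K : Type*} [Field K] [Infinite K] (S : Finset (K × K × K)) (D : ℕ)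
    (h : S.card * (3 * D + 1) < D ^ 3) :
    ∃ P : MvPolynomial (Fin 3) K, P ≠ 0 ∧ P.totalDegree ≤ 3 * D ∧ ∀ i ∈ S, OnL 1 P i := by
  classical
  obtain ⟨T, hT⟩ := Infinite.exists_subset_card_eq K (3 * D + 1)
  obtain ⟨P, hP0, hPd, hP⟩ := vanish_points ((S ×ˢ T).image fun a => ln 1 a.1 a.2) D (by
    refine Finset.card_image_le.trans_lt ?_
    rw [Finset.card_product, hT]; exact h)
  refine ⟨P, hP0, hPd, fun i hi => ?_⟩
  apply onL_of_many 1 P i T (by omega)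
  intro x hx
  apply hP
  rw [Finset.mem_image]
  exact ⟨(i, x), Finset.mem_product.2 ⟨hi, hx⟩, rfl⟩

theorem sampling {α β : Type*} [DecidableEq α] (T : Finset β) (v : α → β → ℝ) (q : ℝ) (hq0 : 0 ≤ q) (hq1 : q ≤ 1)
    (I : Finset α) : ∃ S ⊆ I, ∑ j ∈ T, (∑ i ∈ S, v i j - q * ∑ i ∈ I, v i j) ^ 2
      ≤ q * ∑ i ∈ I, ∑ j ∈ T, (v i j) ^ 2 := by
  induction I using Finset.induction_on with
  | empty => exact ⟨∅, by simp, by simp⟩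
  | insert a I ha ih =>
    obtain ⟨S, hS, h⟩ := ih
    have haS : a ∉ S := fun h => ha (hS h)
    set d : β → ℝ := fun j => ∑ i ∈ S, v i j - q * ∑ i ∈ I, v i j with hd
    have key : q * ∑ j ∈ T, (d j + (1 - q) * v a j) ^ 2 + (1 - q) * ∑ j ∈ T, (d j - q * v a j) ^ 2
        = ∑ j ∈ T, (d j) ^ 2 + q * (1 - q) * ∑ j ∈ T, (v a j) ^ 2 := by
      simp only [Finset.mul_sum]
      rw [← Finset.sum_add_distrib, ← Finset.sum_add_distrib]
      exact Finset.sum_congr rfl fun j _ => by ring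
    have hv : 0 ≤ ∑ j ∈ T, (v a j) ^ 2 := Finset.sum_nonneg fun j _ => sq_nonneg _
    by_cases hc : ∑ j ∈ T, (d j + (1 - q) * v a j) ^ 2 ≤ q * ∑ i ∈ insert a I, ∑ j ∈ T, (v i j) ^ 2
    · refine ⟨insert a S, Finset.insert_subset_insert _ hS, le_trans (le_of_eq ?_) hc⟩
      refine Finset.sum_congr rfl fun j _ => ?_
      rw [Finset.sum_insert haS, Finset.sum_insert ha]
      simp only [hd]; ring
    · refine ⟨S, hS.trans (Finset.subset_insert _ _), ?_⟩
      have e : ∑ j ∈ T, (∑ i ∈ S, v i j - q * ∑ i ∈ insert a I, v i j) ^ 2 = ∑ j ∈ T, (d j - q * v a j) ^ 2 := by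
        refine Finset.sum_congr rfl fun j _ => ?_
        rw [Finset.sum_insert ha]
        simp only [hd]; ring
      rw [e]
      by_contra hc2
      push Not at hc hc2
      rw [Finset.sum_insert ha] at hc hc2
      rcases eq_or_lt_of_le hq1 with h1 | h1
      · subst h1; nlinarith
      · have h' : ∑ j ∈ T, (d j) ^ 2 ≤ q * ∑ i ∈ I, ∑ j ∈ T, (v i j) ^ 2 := h
        have m1 := mul_le_mul_of_nonneg_left hc.le hq0
        have m2 := mul_lt_mul_of_pos_left hc2 (sub_pos.2 h1)
        have m3 := mul_nonneg (mul_nonneg hq0 hq0) hv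
        linarith

theorem sample_cor {α β : Type*} [DecidableEq α] (r : α → β → Prop) [∀ i j, Decidable (r i j)]
    (I : Finset α) (J : Finset β) (n1 n2 q : ℝ) (hq0 : 0 < q) (hq1 : q ≤ 1) (hn : 2 ≤ q * n1)
    (hn2 : 0 < n2) (hI : (I.card : ℝ) ≤ n1) (hJ : (J.card : ℝ) ≤ n2) :
    ∃ S ⊆ I, (S.card : ℝ) ≤ 2 * (q * n1) ∧ ∀ J' ⊆ J, ∀ d0 : ℝ, 0 ≤ d0 →
      (∀ j ∈ J', ((S.filter (fun i => r i j)).card : ℝ) ≤ d0) →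
      q * ∑ j ∈ J', ((I.filter (fun i => r i j)).card : ℝ) ≤ n2 * √(2 * (q * n1)) + n2 * d0 := by
  classical
  let v : α → Option β → ℝ := fun i o => Option.elim o (√n2) (fun j => if r i j then 1 else 0)
  obtain ⟨S, hS, h⟩ := sampling (Finset.insertNone J) v q hq0.le hq1 I
  have hn1 : 0 ≤ n1 := le_trans (by positivity) hI
  have hs2 : √n2 ^ 2 = n2 := Real.sq_sqrt hn2.le
  have hcard : ∀ (A : Finset α) j, ∑ i ∈ A, v i (some j) = ((A.filter (fun i => r i j)).card : ℝ) := by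
    intro A j; simp [v]
  have hnone : ∀ (A : Finset α), ∑ i ∈ A, v i none = A.card * √n2 := by
    intro A; simp [v]
  rw [Finset.sum_insertNone] at h
  simp only [Finset.sum_insertNone, hcard, hnone] at h
  have hR : q * ∑ i ∈ I, (v i none ^ 2 + ∑ j ∈ J, v i (some j) ^ 2) ≤ q * (n1 * (2 * n2)) := by
    apply mul_le_mul_of_nonneg_left _ hq0.le
    calc ∑ i ∈ I, (v i none ^ 2 + ∑ j ∈ J, v i (some j) ^ 2) ≤ ∑ i ∈ I, (2 * n2) := by
          apply Finset.sum_le_sum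
          intro i _
          have : ∑ j ∈ J, v i (some j) ^ 2 ≤ ∑ j ∈ J, (1 : ℝ) := by
            apply Finset.sum_le_sum
            intro j _
            simp only [v, Option.elim]
            split_ifs <;> simp
          have h2 : v i none ^ 2 = n2 := hs2
          simp at this
          linarith
      _ = I.card * (2 * n2) := by simp
      _ ≤ _ := by gcongr
  set dev : β → ℝ := fun j => ((S.filter (fun i => r i j)).card : ℝ) - q * ((I.filter (fun i => r i j)).card : ℝ) with hdev
  have hdevs : 0 ≤ ∑ j ∈ J, dev j ^ 2 := Finset.sum_nonneg fun j _ => sq_nonneg _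
  have h' : (S.card * √n2 - q * (I.card * √n2)) ^ 2 + ∑ j ∈ J, dev j ^ 2 ≤ q * (n1 * (2 * n2)) := h.trans hR
  refine ⟨S, hS, ?_, ?_⟩
  · have h3 : ((S.card : ℝ) - q * I.card) ^ 2 * n2 ≤ (q * n1) ^ 2 * n2 := by
      have e : (S.card * √n2 - q * (I.card * √n2)) ^ 2 = ((S.card : ℝ) - q * I.card) ^ 2 * n2 := by
        linear_combination ((S.card : ℝ) - q * I.card) ^ 2 * hs2
      rw [e] at h'
      nlinarith [mul_le_mul_of_nonneg_right hn (mul_nonneg (mul_nonneg hq0.le hn1) hn2.le)]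
    have h4 := le_of_mul_le_mul_right h3 hn2
    have h5 := abs_le_of_sq_le_sq h4 (by positivity)
    have h6 : q * I.card ≤ q * n1 := by gcongr
    linarith [(abs_le.1 h5).2]
  · intro J' hJ' d0 hd0 hd
    have hJc : (J'.card : ℝ) ≤ n2 := le_trans (by exact_mod_cast Finset.card_le_card hJ') hJ
    have e1 : (∑ j ∈ J', dev j) ^ 2 ≤ n2 * (q * (n1 * (2 * n2))) := by
      refine (sq_sum_le_card_mul_sum_sq (s := J') (f := dev)).trans ?_
      have : ∑ j ∈ J', dev j ^ 2 ≤ ∑ j ∈ J, dev j ^ 2 :=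
        Finset.sum_le_sum_of_subset_of_nonneg hJ' fun j _ _ => sq_nonneg _
      apply mul_le_mul hJc _ (Finset.sum_nonneg fun j _ => sq_nonneg _) hn2.le
      nlinarith [sq_nonneg ((S.card : ℝ) * √n2 - q * (I.card * √n2))]
    have e2 : |∑ j ∈ J', dev j| ≤ n2 * √(2 * (q * n1)) := by
      refine (Real.abs_le_sqrt e1).trans (le_of_eq ?_)
      rw [show n2 * (q * (n1 * (2 * n2))) = n2 ^ 2 * (2 * (q * n1)) by ring, Real.sqrt_mul (sq_nonneg _),
        Real.sqrt_sq hn2.le]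
    have e3 : ∑ j ∈ J', dev j = ∑ j ∈ J', ((S.filter (fun i => r i j)).card : ℝ)
        - q * ∑ j ∈ J', ((I.filter (fun i => r i j)).card : ℝ) := by
      simp only [hdev]
      rw [Finset.sum_sub_distrib, Finset.mul_sum]
    have e4 : ∑ j ∈ J', ((S.filter (fun i => r i j)).card : ℝ) ≤ n2 * d0 := by
      refine (Finset.sum_le_sum hd).trans ?_
      simp only [Finset.sum_const, nsmul_eq_mul]
      gcongr
    have := (abs_le.1 e2).1
    linarith

open Classical in
/-- Number of incidences. -/
noncomputable def einc {K : Type*} [Field K] (I J : Finset (K × K × K)) : ℕ :=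
  ((I ×ˢ J).filter fun a => inc a.1 a.2).card

open Classical in
/-- At most `k` points of `I` on a line. -/
def Coll {K : Type*} [Field K] (k : ℕ) (I : Finset (K × K × K)) : Prop :=
  ∀ x1 ∈ I, ∀ x2 ∈ I, x1 ≠ x2 → (I.filter fun x => ∃ l : K, x = x1 + l • (x2 - x1)).card ≤ k

theorem Coll.mono {K : Type*} [Field K] {k : ℕ} {I I' : Finset (K × K × K)} (h : Coll k I) (hs : I' ⊆ I) :
    Coll k I' := by
  classical
  exact fun x1 h1 x2 h2 hne => (Finset.card_le_card (Finset.filter_subset_filter _ hs)).trans (h x1 (hs h1) x2 (hs h2) hne)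

theorem card_prod_filter {α β : Type*} (I : Finset α) (J : Finset β) (r : α → β → Prop)
    [∀ i j, Decidable (r i j)] [DecidablePred fun a : α × β => r a.1 a.2] :
    ((I ×ˢ J).filter fun a => r a.1 a.2).card = ∑ i ∈ I, (J.filter fun j => r i j).card := by
  simp only [Finset.card_filter]
  rw [Finset.sum_product]
  refine Finset.sum_congr rfl fun i _ => Finset.sum_congr rfl fun j _ => ?_
  congr

theorem card_prod_filter' {α β : Type*} (I : Finset α) (J : Finset β) (r : α → β → Prop)
    [∀ i j, Decidable (r i j)] [DecidablePred fun a : α × β => r a.1 a.2] :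
    ((I ×ˢ J).filter fun a => r a.1 a.2).card = ∑ j ∈ J, (I.filter fun i => r i j).card := by
  simp only [Finset.card_filter]
  rw [Finset.sum_product_right]
  refine Finset.sum_congr rfl fun i _ => Finset.sum_congr rfl fun j _ => ?_
  congr

theorem einc_comm {K : Type*} [Field K] (I J : Finset (K × K × K)) : einc I J = einc J I := by
  classical
  unfold einc
  rw [card_prod_filter, card_prod_filter']
  refine Finset.sum_congr rfl fun i _ => ?_
  congr 1
  ext j
  simp only [Finset.mem_filter, inc_comm i j]

theorem coll_bilinear {K : Type*} [Field K] {k : ℕ} (hk : 1 ≤ k) (I : Finset (K × K × K)) (hc : Coll k I)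
    (hIi : Set.InjOn Prod.fst (I : Set (K × K × K))) (α β γ δ : K)
    (h : ∀ i ∈ I, i.2.1 = α + γ * i.1 ∧ i.2.2 = β + δ * i.1) : I.card ≤ k := by
  classical
  by_contra hcon
  push Not at hcon
  obtain ⟨x1, h1, x2, h2, hne⟩ := Finset.one_lt_card.1 (lt_of_le_of_lt hk hcon)
  have := hc x1 h1 x2 h2 hne
  rw [Finset.filter_true_of_mem] at this
  · omega
  intro x hx
  have ht : x2.1 - x1.1 ≠ 0 := by
    intro h0
    exact hne (hIi h1 h2 (sub_eq_zero.1 h0).symm)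
  refine ⟨(x.1 - x1.1) / (x2.1 - x1.1), ?_⟩
  have hl : (x.1 - x1.1) / (x2.1 - x1.1) * (x2.1 - x1.1) = x.1 - x1.1 := div_mul_cancel₀ _ ht
  set l := (x.1 - x1.1) / (x2.1 - x1.1)
  obtain ⟨a0, b0⟩ := h x hx
  obtain ⟨a1, b1⟩ := h x1 h1
  obtain ⟨a2, b2⟩ := h x2 h2
  ext
  · simp only [Prod.fst_add, Prod.smul_fst, Prod.fst_sub, smul_eq_mul]; linear_combination - hl
  · simp only [Prod.snd_add, Prod.fst_add, Prod.smul_snd, Prod.smul_fst, Prod.fst_sub, Prod.snd_sub, smul_eq_mul]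
    rw [a0, a1, a2]; linear_combination - γ * hl
  · simp only [Prod.snd_add, Prod.smul_snd, Prod.snd_sub, smul_eq_mul]
    rw [b0, b1, b2]; linear_combination - δ * hl

theorem struct_step {K : Type*} [Field K] [Infinite K] (p : ℕ) [CharP K p] (P : MvPolynomial (Fin 3) K)
    (hP : P ≠ 0) (d0 : ℕ) (hd : P.totalDegree ≤ d0) (hp : d0 < p) (k : ℕ) (hk : 1 ≤ k)
    (I J : Finset (K × K × K))
    (hIi : Set.InjOn Prod.fst (I : Set (K × K × K))) (hJi : Set.InjOn Prod.fst (J : Set (K × K × K)))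
    (hc : Coll k I) (hJ : ∀ j ∈ J, OnL 0 P j) :
    ∃ Ib ⊆ I, ∃ Jb ⊆ J, ∃ Jc ⊆ J, ∃ Jr ⊆ J, Ib.card ≤ 6 * d0 ^ 2 ∧ Jb.card ≤ 6 * d0 ^ 2 ∧
      Jc.card + Jr.card = J.card ∧
      einc I J ≤ I.card * d0 + k * Jc.card + einc Ib Jr + einc I Jb := by
  classical
  obtain ⟨Fs, hirr, hsum, hfac⟩ := factor_decomp P hP
  have hsel : ∀ j, ∃ f, j ∈ J → f ∈ Fs ∧ OnL 0 f j := by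
    intro j
    by_cases hj : j ∈ J
    · obtain ⟨f, h1, h2⟩ := hfac 0 j (hJ j hj)
      exact ⟨f, fun _ => ⟨h1, h2⟩⟩
    · exact ⟨0, fun h => absurd h hj⟩
  choose ψ hψ using hsel
  have hdf : ∀ f ∈ Fs, f.totalDegree ≤ d0 := fun f hf =>
    (Finset.single_le_sum (f := fun f : MvPolynomial (Fin 3) K => f.totalDegree) (fun _ _ => Nat.zero_le _) hf).trans (hsum.trans hd)
  have hsq : ∑ f ∈ Fs, 6 * f.totalDegree ^ 2 ≤ 6 * d0 ^ 2 := by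
    rw [← Finset.mul_sum]
    apply Nat.mul_le_mul_left
    calc ∑ f ∈ Fs, f.totalDegree ^ 2 ≤ ∑ f ∈ Fs, f.totalDegree * d0 := by
          apply Finset.sum_le_sum
          intro f hf
          have := hdf f hf
          nlinarith
      _ = (∑ f ∈ Fs, f.totalDegree) * d0 := by rw [Finset.sum_mul]
      _ ≤ d0 ^ 2 := by
          rw [sq]; exact Nat.mul_le_mul_right _ (hsum.trans hd)
  let If : MvPolynomial (Fin 3) K → Finset (K × K × K) := fun f => I.filter fun i => OnL 1 f i
  let Jf : MvPolynomial (Fin 3) K → Finset (K × K × K) := fun f => J.filter fun j => ψ j = f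
  let Ib := (Fs.filter fun f => (If f).card ≤ 6 * f.totalDegree ^ 2).biUnion If
  let Jb := (Fs.filter fun f => (Jf f).card ≤ 6 * f.totalDegree ^ 2).biUnion Jf
  let Jc := J.filter fun j => (If (ψ j)).card ≤ k
  let Jr := J.filter fun j => ¬ (If (ψ j)).card ≤ k
  refine ⟨Ib, ?_, Jb, ?_, Jc, Finset.filter_subset _ _, Jr, Finset.filter_subset _ _, ?_, ?_, ?_, ?_⟩
  · exact Finset.biUnion_subset.2 fun f _ => Finset.filter_subset _ _
  · exact Finset.biUnion_subset.2 fun f _ => Finset.filter_subset _ _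
  · refine Finset.card_biUnion_le.trans (le_trans ?_ hsq)
    refine (Finset.sum_le_sum (fun f hf => (Finset.mem_filter.1 hf).2)).trans ?_
    exact Finset.sum_le_sum_of_subset (Finset.filter_subset _ _)
  · refine Finset.card_biUnion_le.trans (le_trans ?_ hsq)
    refine (Finset.sum_le_sum (fun f hf => (Finset.mem_filter.1 hf).2)).trans ?_
    exact Finset.sum_le_sum_of_subset (Finset.filter_subset _ _)
  · exact Finset.card_filter_add_card_filter_not _
  · let E1 := (I ×ˢ J).filter fun a => inc a.1 a.2 ∧ ¬ OnL 1 (ψ a.2) a.1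
    let E2 := (I ×ˢ Jc).filter fun a => OnL 1 (ψ a.2) a.1
    let E3 := (Ib ×ˢ Jr).filter fun a => inc a.1 a.2
    let E4 := (I ×ˢ Jb).filter fun a => inc a.1 a.2
    have hE1 : E1.card ≤ I.card * d0 := by
      have := card_prod_filter I J (fun i j => inc i j ∧ ¬ OnL 1 (ψ j) i)
      simp only [E1]
      rw [this]
      rw [← smul_eq_mul, ← Finset.sum_const]
      apply Finset.sum_le_sum
      intro i _
      rw [Finset.card_eq_sum_card_fiberwise (f := ψ) (t := Fs)
        (fun j hj => (hψ j (Finset.mem_filter.1 hj).1).1)]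
      refine le_trans (Finset.sum_le_sum fun f hf => ?_) (hsum.trans hd)
      by_cases hon : OnL 1 f i
      · rw [Finset.card_eq_zero.2]
        · exact Nat.zero_le _
        · rw [Finset.filter_eq_empty_iff]
          intro j hj h
          rw [Finset.mem_filter] at hj
          rw [h] at hj
          exact hj.2.2 hon
      · refine few_meet 1 f i _ (hJi.mono ?_) ?_ hon
        · intro j hj
          exact (Finset.mem_filter.1 (Finset.mem_filter.1 hj).1).1
        · intro j hj
          rw [Finset.mem_filter, Finset.mem_filter] at hj
          refine ⟨?_, hj.1.2.1⟩
          have := (hψ j hj.1.1).2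
          rw [hj.2] at this
          exact this
    have hE2 : E2.card ≤ k * Jc.card := by
      have := card_prod_filter' I Jc (fun i j => OnL 1 (ψ j) i)
      simp only [E2]
      rw [this, mul_comm, ← smul_eq_mul, ← Finset.sum_const]
      apply Finset.sum_le_sum
      intro j hj
      exact (Finset.mem_filter.1 hj).2
    have hsub : ((I ×ˢ J).filter fun a => inc a.1 a.2) ⊆ E1 ∪ E2 ∪ E3 ∪ E4 := by
      rintro ⟨i, j⟩ hij
      rw [Finset.mem_filter, Finset.mem_product] at hij
      obtain ⟨⟨hi, hj⟩, hinc⟩ := hij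
      simp only [Finset.mem_union]
      by_cases h1 : OnL 1 (ψ j) i
      swap
      · left; left; left
        exact Finset.mem_filter.2 ⟨Finset.mem_product.2 ⟨hi, hj⟩, hinc, h1⟩
      by_cases h2 : (If (ψ j)).card ≤ k
      · left; left; right
        exact Finset.mem_filter.2 ⟨Finset.mem_product.2 ⟨hi, Finset.mem_filter.2 ⟨hj, h2⟩⟩, h1⟩
      obtain ⟨hF, hon⟩ := hψ j hj
      rcases trichotomy p (ψ j) (hirr _ hF) ((hdf _ hF).trans_lt hp) (If (ψ j)) (Jf (ψ j))
        (hIi.mono (by intro x hx; exact (Finset.mem_filter.1 hx).1))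
        (hJi.mono (by intro x hx; exact (Finset.mem_filter.1 hx).1))
        (fun x hx => (Finset.mem_filter.1 hx).2)
        (fun x hx => by
          have h5 := Finset.mem_filter.1 hx
          rw [← h5.2]; exact (hψ x h5.1).2) with h3 | h3 | ⟨α, β, γ, δ, h3⟩
      · left; right
        refine Finset.mem_filter.2 ⟨Finset.mem_product.2 ⟨?_, Finset.mem_filter.2 ⟨hj, h2⟩⟩, hinc⟩
        exact Finset.mem_biUnion.2 ⟨ψ j, Finset.mem_filter.2 ⟨hF, h3⟩, Finset.mem_filter.2 ⟨hi, h1⟩⟩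
      · right
        refine Finset.mem_filter.2 ⟨Finset.mem_product.2 ⟨hi, ?_⟩, hinc⟩
        exact Finset.mem_biUnion.2 ⟨ψ j, Finset.mem_filter.2 ⟨hF, h3⟩, Finset.mem_filter.2 ⟨hj, rfl⟩⟩
      · exfalso
        apply h2
        refine coll_bilinear hk _ (hc.mono (Finset.filter_subset _ _))
          (hIi.mono (by intro x hx; exact (Finset.mem_filter.1 hx).1)) α β γ δ ?_
        intro x hx
        exact h3 x (Finset.mem_filter.1 hx).2
    have h6 := Finset.card_le_card hsub
    have h7 := Finset.card_union_le (E1 ∪ E2 ∪ E3) E4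
    have h8 := Finset.card_union_le (E1 ∪ E2) E3
    have h9 := Finset.card_union_le E1 E2
    have h10 : E3.card = einc Ib Jr := rfl
    have h11 : E4.card = einc I Jb := rfl
    have h12 : ((I ×ˢ J).filter fun a => inc a.1 a.2).card = einc I J := rfl
    omega

theorem incidence {K : Type*} [Field K] [Infinite K] (p : ℕ) [CharP K p] (k : ℕ) (hk : 1 ≤ k) :
    ∀ n1 n2 : ℕ, n1 ≤ n2 → n1 ≤ p ^ 2 → ∀ I J : Finset (K × K × K), I.card ≤ n1 → J.card ≤ n2 →
    Set.InjOn Prod.fst (I : Set (K × K × K)) → Set.InjOn Prod.fst (J : Set (K × K × K)) →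
    Coll k I → Coll k J →
    (einc I J : ℝ) ≤ 10000 * √n1 * n2 + k * (I.card + J.card + n1) := by
  classical
  intro n1
  induction n1 using Nat.strong_induction_on with
  | _ n1 ih =>
  intro n2 h12 hp I J hI hJ hIi hJi hcI hcJ
  have hs : √(n1 : ℝ) ^ 2 = n1 := Real.sq_sqrt (Nat.cast_nonneg _)
  have hs0 : 0 ≤ √(n1 : ℝ) := Real.sqrt_nonneg _
  have hIr : (I.card : ℝ) ≤ n1 := by exact_mod_cast hI
  have hJr : (J.card : ℝ) ≤ n2 := by exact_mod_cast hJ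
  have h12r : (n1 : ℝ) ≤ n2 := by exact_mod_cast h12
  have hn2 : (0 : ℝ) ≤ n2 := Nat.cast_nonneg _
  have hM : 0 ≤ √(n1 : ℝ) * n2 := mul_nonneg hs0 hn2
  by_cases hbase : n1 < 172800
  · have h1 : einc I J ≤ I.card * J.card := by
      unfold einc
      exact (Finset.card_filter_le _ _).trans (le_of_eq (Finset.card_product _ _))
    have h1r : (einc I J : ℝ) ≤ I.card * J.card := by exact_mod_cast h1
    have h2 : (I.card : ℝ) * J.card ≤ n1 * n2 := by gcongr
    have h3 : √(n1 : ℝ) ≤ 10000 := by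
      rw [Real.sqrt_le_left (by norm_num)]
      have : (n1 : ℝ) < 172800 := by exact_mod_cast hbase
      linarith
    have h4 : (n1 : ℝ) * n2 ≤ 10000 * √n1 * n2 := by
      calc (n1 : ℝ) * n2 = √n1 * (√n1 * n2) := by rw [← mul_assoc, ← sq, hs]
        _ ≤ 10000 * (√n1 * n2) := by gcongr
        _ = _ := by ring
    have h5 : (0 : ℝ) ≤ k * (I.card + J.card + n1) := by positivity
    linarith
  push Not at hbase
  have hbr : (172800 : ℝ) ≤ n1 := by exact_mod_cast hbase
  have hppos : 0 < p := by
    rcases Nat.eq_zero_or_pos p with h | h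
    · subst h; simp at hp; omega
    · exact h
  have hn2pos : (0 : ℝ) < n2 := by linarith
  set q : ℝ := 1 / 86400 with hq
  set u : ℝ := √(q * n1) with hu
  have hqn : 2 ≤ q * n1 := by rw [hq]; linarith
  have hu2 : u ^ 2 = q * n1 := Real.sq_sqrt (by linarith)
  have hu0 : 0 ≤ u := Real.sqrt_nonneg _
  have hu1 : 1 ≤ u := by nlinarith
  have hus : 293 * u ≤ √n1 := by
    apply Real.le_sqrt_of_sq_le
    rw [mul_pow, hu2, hq]; nlinarith
  have hsp : √(n1 : ℝ) ≤ p := by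
    rw [Real.sqrt_le_left (by positivity)]
    exact_mod_cast hp
  obtain ⟨S, hS, hSc, hSj⟩ := sample_cor (fun i j : K × K × K => inc i j) I J n1 n2 q (by rw [hq]; norm_num)
    (by rw [hq]; norm_num) hqn hn2pos hIr hJr
  set D : ℕ := ⌊3 * u⌋₊ + 1 with hD
  have hD1 : 3 * u < D := by rw [hD]; push_cast; exact Nat.lt_floor_add_one _
  have hD2 : (D : ℝ) ≤ 3 * u + 1 := by
    rw [hD]; push_cast
    have := Nat.floor_le (show 0 ≤ 3 * u by positivity)
    linarith
  have hDpos : 0 < (D : ℝ) := by linarith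
  have hvan : S.card * (3 * D + 1) < D ^ 3 := by
    have : (S.card : ℝ) * (3 * D + 1) < (D : ℝ) ^ 3 := by
      have a1 : (S.card : ℝ) * (3 * D + 1) ≤ 2 * (q * n1) * (4 * D) := by
        gcongr
        have : (1 : ℝ) ≤ D := by linarith
        linarith
      have a2 : 9 * (q * n1) < (D : ℝ) ^ 2 := by
        rw [← hu2]; nlinarith
      nlinarith
    exact_mod_cast this
  obtain ⟨P, hP0, hPd, hPS⟩ := vanish_lines S D hvan
  have hd0 : ((3 * D : ℕ) : ℝ) ≤ 12 * u := by push_cast; linarith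
  have hd0p : 3 * D < p := by
    have : ((3 * D : ℕ) : ℝ) < p := by
      have : (0 : ℝ) < p := by exact_mod_cast hppos
      linarith
    exact_mod_cast this
  set J1 := J.filter fun j => OnL 0 P j with hJ1
  set J0 := J.filter fun j => ¬ OnL 0 P j with hJ0
  have hsplit : einc I J = einc I J1 + ∑ j ∈ J0, (I.filter fun i => inc i j).card := by
    unfold einc
    rw [card_prod_filter' I J (fun i j => inc i j), card_prod_filter' I J1 (fun i j => inc i j), hJ1, hJ0,
      Finset.sum_filter_add_sum_filter_not]
  have hB0 := hSj J0 (Finset.filter_subset _ _) ((3 * D : ℕ) : ℝ) (by positivity) (by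
    intro j hj
    have hj2 := (Finset.mem_filter.1 hj).2
    have := few_meet 0 P j (S.filter fun i => inc i j)
      (hIi.mono (by intro x hx; exact hS (Finset.mem_filter.1 hx).1))
      (by
        intro i hi
        rw [Finset.mem_filter] at hi
        exact ⟨hPS i hi.1, (inc_comm i j).1 hi.2⟩) hj2
    exact_mod_cast this.trans hPd)
  have hB0' : (∑ j ∈ J0, ((I.filter fun i => inc i j).card : ℝ)) ≤ 4000 * (√n1 * n2) := by
    have hsq : √(2 * (q * n1)) ≤ 1.5 * u := by
      rw [Real.sqrt_le_left (by positivity), mul_pow, hu2]; linarith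
    have e1 : n2 * √(2 * (q * n1)) + n2 * ((3 * D : ℕ) : ℝ) ≤ n2 * (1.5 * u) + n2 * (12 * u) := by gcongr
    have e2 : n2 * (293 * u) ≤ n2 * √n1 := by gcongr
    have e3 := hB0.trans e1
    rw [hq] at e3
    nlinarith
  obtain ⟨Ib, hIb, Jb, hJb, Jc, hJc, Jr, hJr', cIb, cJb, ccr, hstep⟩ := struct_step p P hP0 (3 * D) hPd hd0p k hk I J1
    hIi (hJi.mono (by intro x hx; exact (Finset.mem_filter.1 hx).1)) hcI
    (fun j hj => (Finset.mem_filter.1 hj).2)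
  have hJ1J : J1 ⊆ J := Finset.filter_subset _ _
  set n' := n1 / 100 with hn'
  have hsmall : 6 * (3 * D) ^ 2 ≤ n' := by
    rw [hn', Nat.le_div_iff_mul_le (by norm_num)]
    have : ((6 * (3 * D) ^ 2 * 100 : ℕ) : ℝ) ≤ n1 := by
      have a : ((3 * D : ℕ) : ℝ) ^ 2 ≤ (12 * u) ^ 2 := by gcongr
      rw [mul_pow, hu2, hq] at a
      push_cast at a ⊢
      linarith
    exact_mod_cast this
  have hn'1 : n' < n1 := by omega
  have hn'r : (n' : ℝ) ≤ n1 / 100 := by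
    rw [hn']; exact_mod_cast Nat.cast_div_le
  have hsn' : √(n' : ℝ) ≤ √n1 / 10 := by
    rw [Real.sqrt_le_left (by positivity), div_pow, hs]; linarith
  have r1 := ih n' hn'1 n2 (by omega) (by omega) Ib Jr (by omega)
    ((Finset.card_le_card (hJr'.trans hJ1J)).trans hJ)
    (hIi.mono (by exact_mod_cast hIb)) (hJi.mono (by exact_mod_cast hJr'.trans hJ1J))
    (hcI.mono hIb) (hcJ.mono (hJr'.trans hJ1J))
  have r2 := ih n' hn'1 n1 (by omega) (by omega) Jb I (by omega) hI
    (hJi.mono (by exact_mod_cast hJb.trans hJ1J)) hIi (hcJ.mono (hJb.trans hJ1J)) hcI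
  rw [einc_comm] at r2
  have hstep' : (einc I J1 : ℝ) ≤ I.card * ((3 * D : ℕ) : ℝ) + k * Jc.card + einc Ib Jr + einc I Jb := by
    exact_mod_cast hstep
  have hsplit' : (einc I J : ℝ) = einc I J1 + ∑ j ∈ J0, ((I.filter fun i => inc i j).card : ℝ) := by
    exact_mod_cast hsplit
  have t1 : (I.card : ℝ) * ((3 * D : ℕ) : ℝ) ≤ √n1 * n2 := by
    calc (I.card : ℝ) * ((3 * D : ℕ) : ℝ) ≤ n2 * (12 * u) := by
          gcongr; exact hI.trans h12
      _ ≤ n2 * √n1 := by gcongr; linarith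
      _ = _ := mul_comm _ _
  have t2 : 10000 * √(n' : ℝ) * n2 ≤ 1000 * (√n1 * n2) := by
    calc 10000 * √(n' : ℝ) * n2 ≤ 10000 * (√n1 / 10) * n2 := by gcongr
      _ = _ := by ring
  have t3 : 10000 * √(n' : ℝ) * n1 ≤ 1000 * (√n1 * n2) := by
    calc 10000 * √(n' : ℝ) * n1 ≤ 10000 * (√n1 / 10) * n2 := by gcongr
      _ = _ := by ring
  have t4 : (k : ℝ) * Jc.card + k * (Ib.card + Jr.card + n') + k * (Jb.card + I.card + n')
      ≤ k * (I.card + J.card + n1) := by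
    rw [← mul_add, ← mul_add]
    apply mul_le_mul_of_nonneg_left _ (Nat.cast_nonneg _)
    have := Finset.card_le_card hJ1J
    have : Jc.card + (Ib.card + Jr.card + n') + (Jb.card + I.card + n') ≤ I.card + J.card + n1 := by omega
    exact_mod_cast this
  rw [hsplit']
  linarith

theorem avoid_roots {K ι : Type*} [Field K] [Infinite K] (T : Finset ι) (f : ι → Polynomial K)
    (h : ∀ i ∈ T, f i ≠ 0) : ∃ θ : K, ∀ i ∈ T, (f i).eval θ ≠ 0 := by
  classical
  obtain ⟨θ, hθ⟩ := Infinite.exists_notMem_finset ((∏ i ∈ T, f i).roots.toFinset)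
  refine ⟨θ, fun i hi h0 => hθ ?_⟩
  rw [Multiset.mem_toFinset, Polynomial.mem_roots (Finset.prod_ne_zero_iff.2 h), Polynomial.IsRoot,
    Polynomial.eval_prod]
  exact Finset.prod_eq_zero hi h0

/-- Linear shear. -/
def mA {K : Type*} [Field K] (θ : K) (x : K × K × K) : K × K × K :=
  (x.1 + θ * x.2.2 + θ ^ 2 * x.2.1, x.2.1, x.2.2)

/-- Dual projective map. -/
def mP {K : Type*} [Field K] (θ : K) (x : K × K × K) : K × K × K :=
  ((x.1 + θ * x.2.2) / (1 + θ ^ 2 * x.2.2), x.2.1 / (1 + θ ^ 2 * x.2.2), x.2.2 / (1 + θ ^ 2 * x.2.2))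

theorem inc_mA_mP {K : Type*} [Field K] (θ : K) (x y : K × K × K) (h : 1 + θ ^ 2 * y.2.2 ≠ 0) :
    inc (mA θ x) (mP θ y) ↔ inc x y := by
  unfold inc mA mP
  simp only
  rw [← mul_left_inj' h]
  have e1 : (x.2.1 + x.2.2 * ((y.1 + θ * y.2.2) / (1 + θ ^ 2 * y.2.2))) * (1 + θ ^ 2 * y.2.2)
      = x.2.1 * (1 + θ ^ 2 * y.2.2) + x.2.2 * (y.1 + θ * y.2.2) := by field_simp
  have e2 : (y.2.1 / (1 + θ ^ 2 * y.2.2) + y.2.2 / (1 + θ ^ 2 * y.2.2) * (x.1 + θ * x.2.2 + θ ^ 2 * x.2.1)) *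
      (1 + θ ^ 2 * y.2.2) = y.2.1 + y.2.2 * (x.1 + θ * x.2.2 + θ ^ 2 * x.2.1) := by field_simp
  rw [e1, e2]
  constructor
  · intro h; linear_combination h
  · intro h; linear_combination h

/-- Maps pulling collinearity back. -/
def Pull {K : Type*} [Field K] (φ : K × K × K → K × K × K) (X : Finset (K × K × K)) : Prop :=
  ∀ x1 ∈ X, ∀ x2 ∈ X, ∀ x ∈ X, ∀ l : K, φ x = φ x1 + l • (φ x2 - φ x1) → ∃ l' : K, x = x1 + l' • (x2 - x1)

theorem Pull.injOn {K : Type*} [Field K] {φ : K × K × K → K × K × K} {X : Finset (K × K × K)} (h : Pull φ X) :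
    Set.InjOn φ (X : Set (K × K × K)) := by
  intro x hx y hy hxy
  obtain ⟨l, hl⟩ := h y hy y hy x hx 0 (by simp [hxy])
  simpa using hl

theorem Pull.coll {K : Type*} [Field K] [DecidableEq K] {φ : K × K × K → K × K × K} {X : Finset (K × K × K)} (h : Pull φ X)
    {k : ℕ} (hc : Coll k X) : Coll k (X.image φ) := by
  classical
  intro y1 h1 y2 h2 hne
  rw [Finset.mem_image] at h1 h2
  obtain ⟨x1, hx1, rfl⟩ := h1
  obtain ⟨x2, hx2, rfl⟩ := h2
  refine le_trans ?_ (hc x1 hx1 x2 hx2 (fun e => hne (by rw [e])))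
  refine le_trans (Finset.card_le_card ?_) (Finset.card_image_le (f := φ))
  intro y hy
  rw [Finset.mem_filter, Finset.mem_image] at hy
  obtain ⟨⟨x, hx, rfl⟩, l, hl⟩ := hy
  rw [Finset.mem_image]
  exact ⟨x, Finset.mem_filter.2 ⟨hx, h x1 hx1 x2 hx2 x hx l hl⟩, rfl⟩

theorem pull_mA {K : Type*} [Field K] (θ : K) (X : Finset (K × K × K)) : Pull (mA θ) X := by
  intro x1 _ x2 _ x _ l h
  refine ⟨l, ?_⟩
  have e1 := congrArg (fun z => z.1) h
  have e2 := congrArg (fun z => z.2.1) h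
  have e3 := congrArg (fun z => z.2.2) h
  simp [mA] at e1 e2 e3
  ext
  · simp only [Prod.fst_add, Prod.smul_fst, Prod.fst_sub, smul_eq_mul]
    linear_combination e1 - θ * e3 - θ ^ 2 * e2
  · simpa using e2
  · simpa using e3

theorem pull_mP {K : Type*} [Field K] (θ : K) (X : Finset (K × K × K)) (hX : ∀ x ∈ X, 1 + θ ^ 2 * x.2.2 ≠ 0) :
    Pull (mP θ) X := by
  intro x1 h1 x2 h2 x hx l h
  have g := hX x hx
  have g1 := hX x1 h1
  have g2 := hX x2 h2
  refine ⟨l * (1 + θ ^ 2 * x.2.2) / (1 + θ ^ 2 * x2.2.2), ?_⟩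
  have e1 := congrArg (fun z => z.1) h
  have e2 := congrArg (fun z => z.2.1) h
  have e3 := congrArg (fun z => z.2.2) h
  simp [mP] at e1 e2 e3
  obtain ⟨t, a, b⟩ := x
  obtain ⟨t1, a1, b1⟩ := x1
  obtain ⟨t2, a2, b2⟩ := x2
  simp only at *
  obtain ⟨H, hH⟩ : ∃ H, H = 1 + θ ^ 2 * b := ⟨_, rfl⟩
  obtain ⟨H1, hH1⟩ : ∃ H1, H1 = 1 + θ ^ 2 * b1 := ⟨_, rfl⟩
  obtain ⟨H2, hH2⟩ : ∃ H2, H2 = 1 + θ ^ 2 * b2 := ⟨_, rfl⟩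
  rw [← hH, ← hH1, ← hH2] at e1 e2 e3
  rw [← hH] at g
  rw [← hH1] at g1
  rw [← hH2] at g2
  rw [← hH, ← hH2]
  have k0 : H * H⁻¹ = 1 := mul_inv_cancel₀ g
  have k1 : H1 * H1⁻¹ = 1 := mul_inv_cancel₀ g1
  have k2 : H2 * H2⁻¹ = 1 := mul_inv_cancel₀ g2
  simp only [div_eq_mul_inv] at e1 e2 e3 ⊢
  have e4 : H⁻¹ = H1⁻¹ + l * (H2⁻¹ - H1⁻¹) := by
    have : θ ^ 2 * (b * H⁻¹) = θ ^ 2 * (b1 * H1⁻¹ + l * (b2 * H2⁻¹ - b1 * H1⁻¹)) := by rw [e3]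
    linear_combination -this - H⁻¹ * hH + (1 - l) * H1⁻¹ * hH1 + l * H2⁻¹ * hH2 + k0 - (1 - l) * k1 - l * k2
  have e5 : (1 - l) * H * H1⁻¹ = 1 - l * H * H2⁻¹ := by linear_combination k0 - H * e4
  have ea : a = a1 + l * H * H2⁻¹ * (a2 - a1) := by
    linear_combination H * e2 - a * k0 + a1 * e5
  have eb : b = b1 + l * H * H2⁻¹ * (b2 - b1) := by
    linear_combination H * e3 - b * k0 + b1 * e5
  have et : t = t1 + l * H * H2⁻¹ * (t2 - t1) := by
    linear_combination H * e1 - (t + θ * b) * k0 + (t1 + θ * b1) * e5 - θ * eb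
  ext
  · simpa using et
  · simpa using ea
  · simpa using eb

theorem einc_image {K : Type*} [Field K] [DecidableEq K] (X Y : Finset (K × K × K)) (φ ψ : K × K × K → K × K × K)
    (hφ : Set.InjOn φ (X : Set (K × K × K))) (hψ : Set.InjOn ψ (Y : Set (K × K × K)))
    (h : ∀ x ∈ X, ∀ y ∈ Y, inc (φ x) (ψ y) ↔ inc x y) : einc (X.image φ) (Y.image ψ) = einc X Y := by
  classical
  unfold einc
  rw [card_prod_filter _ _ (fun i j => inc i j), card_prod_filter _ _ (fun i j => inc i j), Finset.sum_image hφ]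
  refine Finset.sum_congr rfl fun x hx => ?_
  rw [Finset.filter_image, Finset.card_image_of_injOn (hψ.mono (by intro z hz; exact (Finset.mem_filter.1 hz).1))]
  congr 1
  ext y
  simp only [Finset.mem_filter]
  constructor
  · rintro ⟨a, b⟩; exact ⟨a, (h x hx y a).1 b⟩
  · rintro ⟨a, b⟩; exact ⟨a, (h x hx y a).2 b⟩

theorem quad_zero {K : Type*} [Field K] (u v w : K)
    (h0 : Polynomial.C u + Polynomial.C v * Polynomial.X + Polynomial.C w * Polynomial.X ^ 2 = 0) :
    u = 0 ∧ v = 0 ∧ w = 0 := by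
  have c0 := congrArg (fun g => Polynomial.coeff g 0) h0
  have c1 := congrArg (fun g => Polynomial.coeff g 1) h0
  have c2 := congrArg (fun g => Polynomial.coeff g 2) h0
  simp [Polynomial.coeff_X, Polynomial.coeff_C, Polynomial.coeff_X_pow] at c0 c1 c2
  exact ⟨c0, c1, c2⟩

theorem generic_shear {K : Type*} [Field K] [Infinite K] (X Y : Finset (K × K × K)) :
    ∃ θ : K, (∀ x ∈ X, ∀ x' ∈ X, x ≠ x' → (mA θ x).1 ≠ (mA θ x').1) ∧ (∀ y ∈ Y, 1 + θ ^ 2 * y.2.2 ≠ 0) ∧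
      (∀ y ∈ Y, ∀ y' ∈ Y, y.1 ≠ y'.1 → (mP θ y).1 ≠ (mP θ y').1) := by
  classical
  let f1 : (K × K × K) × (K × K × K) → Polynomial K := fun a =>
    Polynomial.C (a.1.1 - a.2.1) + Polynomial.C (a.1.2.2 - a.2.2.2) * Polynomial.X
      + Polynomial.C (a.1.2.1 - a.2.2.1) * Polynomial.X ^ 2
  let f2 : (K × K × K) → Polynomial K := fun y => 1 + Polynomial.X ^ 2 * Polynomial.C y.2.2
  let f3 : (K × K × K) × (K × K × K) → Polynomial K := fun a =>
    (Polynomial.C a.1.1 + Polynomial.X * Polynomial.C a.1.2.2) * (1 + Polynomial.X ^ 2 * Polynomial.C a.2.2.2)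
    - (Polynomial.C a.2.1 + Polynomial.X * Polynomial.C a.2.2.2) * (1 + Polynomial.X ^ 2 * Polynomial.C a.1.2.2)
  have n1 : ∀ a ∈ X.offDiag, f1 a ≠ 0 := by
    intro a ha h0
    rw [Finset.mem_offDiag] at ha
    apply ha.2.2
    obtain ⟨c0, c1, c2⟩ := quad_zero _ _ _ h0
    ext
    · exact sub_eq_zero.1 c0
    · exact sub_eq_zero.1 c2
    · exact sub_eq_zero.1 c1
  have n2 : ∀ a ∈ Y, f2 a ≠ 0 := by
    intro a _ h0
    have := congrArg (Polynomial.eval 0) h0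
    simp [f2] at this
  have n3 : ∀ a ∈ (Y ×ˢ Y).filter (fun a => a.1.1 ≠ a.2.1), f3 a ≠ 0 := by
    intro a ha h0
    have := congrArg (Polynomial.eval 0) h0
    simp [f3] at this
    exact (Finset.mem_filter.1 ha).2 (sub_eq_zero.1 this)
  let fs : ((K × K × K) × (K × K × K)) ⊕ (K × K × K) ⊕ ((K × K × K) × (K × K × K)) → Polynomial K :=
    Sum.elim f1 (Sum.elim f2 f3)
  obtain ⟨θ, hθ⟩ := avoid_roots (X.offDiag.disjSum (Y.disjSum ((Y ×ˢ Y).filter (fun a => a.1.1 ≠ a.2.1)))) fs (by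
    intro i hi
    rcases i with i | i | i
    · exact n1 i (by simpa using hi)
    · exact n2 i (by simpa using hi)
    · exact n3 i (by simpa using hi))
  have g2 : ∀ y ∈ Y, 1 + θ ^ 2 * y.2.2 ≠ 0 := by
    intro y hy
    have := hθ (Sum.inr (Sum.inl y)) (by simpa using hy)
    simp [fs, f2] at this
    rw [mul_comm]
    exact this
  refine ⟨θ, ?_, g2, ?_⟩
  · intro x hx x' hx' hne h
    have := hθ (Sum.inl (x, x')) (by simp [hx, hx', hne])
    apply this
    simp only [mA] at h
    simp [fs, f1]
    linear_combination h
  · intro y hy y' hy' hne h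
    have := hθ (Sum.inr (Sum.inr (y, y'))) (by simp [hy, hy', hne])
    apply this
    simp only [mP] at h
    rw [div_eq_div_iff (g2 y hy) (g2 y' hy')] at h
    simp [fs, f3]
    linear_combination h

theorem incidence_gen {K : Type*} [Field K] [Infinite K] (p : ℕ) [CharP K p] (k : ℕ) (hk : 1 ≤ k)
    (n : ℕ) (hn : n ≤ p ^ 2) (I J : Finset (K × K × K)) (hI : I.card ≤ n) (hJ : J.card ≤ n)
    (cI : Coll k I) (cJ : Coll k J) : (einc I J : ℝ) ≤ 10000 * √n * n + 3 * k * n := by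
  classical
  obtain ⟨θ, a1, a2, -⟩ := generic_shear I J
  set I1 := I.image (mA θ) with hI1
  set J1 := J.image (mP θ) with hJ1
  have pI := pull_mA θ I
  have pJ := pull_mP θ J a2
  have e1 : einc I1 J1 = einc I J := einc_image I J _ _ pI.injOn pJ.injOn
    (fun x _ y hy => inc_mA_mP θ x y (a2 y hy))
  have cI1 := pI.coll cI
  have cJ1 := pJ.coll cJ
  have dI1 : ∀ x ∈ I1, ∀ x' ∈ I1, x ≠ x' → x.1 ≠ x'.1 := by
    intro x hx x' hx' hne
    obtain ⟨z, hz, rfl⟩ := Finset.mem_image.1 hx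
    obtain ⟨z', hz', rfl⟩ := Finset.mem_image.1 hx'
    exact a1 z hz z' hz' (fun e => hne (by rw [e]))
  obtain ⟨φ, b1, b2, b3⟩ := generic_shear J1 I1
  set I2 := I1.image (mP φ) with hI2
  set J2 := J1.image (mA φ) with hJ2
  have qJ := pull_mA φ J1
  have qI := pull_mP φ I1 b2
  have e2 : einc J2 I2 = einc J1 I1 := einc_image J1 I1 _ _ qJ.injOn qI.injOn
    (fun x _ y hy => inc_mA_mP φ x y (b2 y hy))
  have injI : Set.InjOn Prod.fst (I2 : Set (K × K × K)) := by
    intro x hx x' hx' h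
    obtain ⟨z, hz, rfl⟩ := Finset.mem_image.1 hx
    obtain ⟨z', hz', rfl⟩ := Finset.mem_image.1 hx'
    by_contra hne
    have hzz : z ≠ z' := fun e => hne (by rw [e])
    exact b3 z hz z' hz' (dI1 z hz z' hz' hzz) h
  have injJ : Set.InjOn Prod.fst (J2 : Set (K × K × K)) := by
    intro x hx x' hx' h
    obtain ⟨z, hz, rfl⟩ := Finset.mem_image.1 hx
    obtain ⟨z', hz', rfl⟩ := Finset.mem_image.1 hx'
    by_contra hne
    have hzz : z ≠ z' := fun e => hne (by rw [e])
    exact b1 z hz z' hz' hzz h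
  have nI : I2.card ≤ n := (Finset.card_image_le.trans Finset.card_image_le).trans hI
  have nJ : J2.card ≤ n := (Finset.card_image_le.trans Finset.card_image_le).trans hJ
  have key := incidence p k hk n n le_rfl hn J2 I2 nJ nI injJ injI (qJ.coll cJ1) (qI.coll cI1)
  rw [e2, einc_comm, e1] at key
  have h1 : (I2.card : ℝ) ≤ n := by exact_mod_cast nI
  have h2 : (J2.card : ℝ) ≤ n := by exact_mod_cast nJ
  have h3 : (k : ℝ) * (J2.card + I2.card + n) ≤ k * (n + n + n) := by gcongr
  linarith

/-- Determinant collinearity of `x` with `x1, x2`. -/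
def onl {F : Type*} [Field F] (x1 x2 x : F × F) : Prop :=
  (x.1 - x1.1) * (x2.2 - x1.2) = (x.2 - x1.2) * (x2.1 - x1.1)

open Classical in
/-- At most `k` points of `L` on a line through two distinct points of `L`. -/
def ColP {F : Type*} [Field F] (k : ℕ) (L : Finset (F × F)) : Prop :=
  ∀ x1 ∈ L, ∀ x2 ∈ L, x1 ≠ x2 →
    (L.filter fun x => onl x1 x2 x).card ≤ k

/-- Embedding of triples. -/
def eTr {F K : Type*} [Field F] [Field K] (φ : F →+* K) (a : F × F × F) : K × K × K := (φ a.1, φ a.2.1, φ a.2.2)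

theorem eTr_inj {F K : Type*} [Field F] [Field K] (φ : F →+* K) : Function.Injective (eTr φ) := by
  rintro ⟨a, b, c⟩ ⟨a', b', c'⟩ h
  simp only [eTr, Prod.mk.injEq] at h
  rw [φ.injective h.1, φ.injective h.2.1, φ.injective h.2.2]

theorem coll_cart {F K : Type*} [Field F] [Field K] [DecidableEq K] (φ : F →+* K) (k : ℕ) (W : Finset F) (L : Finset (F × F))
    (hW : W.card ≤ k) (hL : ColP k L) : Coll k ((W ×ˢ L).image (eTr φ)) := by
  classical
  intro y1 h1 y2 h2 hne
  rw [Finset.mem_image] at h1 h2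
  obtain ⟨x1, hx1, rfl⟩ := h1
  obtain ⟨x2, hx2, rfl⟩ := h2
  rw [Finset.mem_product] at hx1 hx2
  by_cases hs : x1.2 = x2.2
  · refine le_trans ?_ hW
    refine le_trans (Finset.card_le_card (t := W.image (fun w => eTr φ (w, x1.2))) ?_) Finset.card_image_le
    intro y hy
    rw [Finset.mem_filter, Finset.mem_image] at hy
    obtain ⟨⟨x, hx, rfl⟩, l, hl⟩ := hy
    rw [Finset.mem_product] at hx
    rw [Finset.mem_image]
    refine ⟨x.1, hx.1, ?_⟩
    have e2 := congrArg (fun z => z.2.1) hl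
    have e3 := congrArg (fun z => z.2.2) hl
    simp [eTr, hs] at e2 e3
    simp [eTr, hs, e2, e3]
  · refine le_trans ?_ (hL x1.2 hx1.2 x2.2 hx2.2 hs)
    refine Finset.card_le_card_of_surjOn (fun u => (φ x1.1, φ x1.2.1, φ x1.2.2) +
      (if x2.2.1 = x1.2.1 then φ ((u.2 - x1.2.2) / (x2.2.2 - x1.2.2)) else φ ((u.1 - x1.2.1) / (x2.2.1 - x1.2.1))) •
        (eTr φ x2 - eTr φ x1)) ?_
    intro y hy
    rw [Finset.mem_coe, Finset.mem_filter, Finset.mem_image] at hy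
    obtain ⟨⟨x, hx, rfl⟩, l, hl⟩ := hy
    rw [Finset.mem_product] at hx
    have e2 := congrArg (fun z => z.2.1) hl
    have e3 := congrArg (fun z => z.2.2) hl
    simp [eTr] at e2 e3
    refine ⟨x.2, ?_, ?_⟩
    · rw [Finset.mem_coe, Finset.mem_filter]
      refine ⟨hx.2, ?_⟩
      unfold onl
      apply φ.injective
      simp only [map_mul, map_sub]
      rw [e2, e3]; ring
    · rw [hl]
      have : (if x2.2.1 = x1.2.1 then φ ((x.2.2 - x1.2.2) / (x2.2.2 - x1.2.2)) else
          φ ((x.2.1 - x1.2.1) / (x2.2.1 - x1.2.1))) = l := by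
        split_ifs with h
        · have h' : φ x2.2.2 - φ x1.2.2 ≠ 0 := by
            intro h0
            apply hs
            ext
            · exact h.symm
            · exact (φ.injective (sub_eq_zero.1 h0)).symm
          rw [map_div₀, map_sub, map_sub, e3]
          field_simp
          ring
        · have h' : φ x2.2.1 - φ x1.2.1 ≠ 0 := by
            intro h0
            exact h (φ.injective (sub_eq_zero.1 h0))
          rw [map_div₀, map_sub, map_sub, e2]
          field_simp
          ring
      simp only [this]
      rfl

theorem cart_energy (p : ℕ) [Fact p.Prime] (L : Finset (ZMod p × ZMod p)) (W V : Finset (ZMod p)) (k : ℕ) (hk : 1 ≤ k)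
    (hW : W.card ≤ k) (hN : W.card * L.card ≤ p ^ 2) (hL : ColP k L) :
    (((W ×ˢ L).filter fun a => a.2.1 + a.2.2 * a.1 ∈ V).card : ℝ) ^ 2 ≤
      V.card * (10000 * √((W.card * L.card : ℕ) : ℝ) * ((W.card * L.card : ℕ) : ℝ) + 3 * k * ((W.card * L.card : ℕ) : ℝ)) := by
  classical
  set S := (W ×ˢ L).filter fun a => a.2.1 + a.2.2 * a.1 ∈ V with hS
  let val : ZMod p × ZMod p × ZMod p → ZMod p := fun a => a.2.1 + a.2.2 * a.1
  let K := AlgebraicClosure (ZMod p)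
  let φ : ZMod p →+* K := algebraMap (ZMod p) K
  have : CharP K p := charP_of_injective_algebraMap φ.injective p
  have : Infinite K := IsAlgClosed.instInfinite
  set I := (W ×ˢ L).image (eTr φ) with hI
  have hc := coll_cart φ k W L hW hL
  have hcard : I.card ≤ W.card * L.card := by
    rw [← Finset.card_product]; exact Finset.card_image_le
  have key := incidence_gen p k hk _ hN I I hcard hcard hc hc
  refine le_trans ?_ (mul_le_mul_of_nonneg_left key (by positivity))
  set Q := (S ×ˢ S).filter fun ab => val ab.1 = val ab.2 with hQ
  have hQI : Q.card ≤ einc I I := by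
    unfold einc
    refine Finset.card_le_card_of_injOn (fun ab => (eTr φ (ab.2.1, ab.1.2), eTr φ (ab.1.1, ab.2.2))) ?_ ?_
    · intro ab hab
      rw [Finset.mem_coe, Finset.mem_filter, Finset.mem_product, Finset.mem_filter, Finset.mem_filter,
        Finset.mem_product, Finset.mem_product] at hab
      obtain ⟨⟨⟨h1, _⟩, ⟨h2, _⟩⟩, h3⟩ := hab
      rw [Finset.mem_coe, Finset.mem_filter, Finset.mem_product]
      refine ⟨⟨Finset.mem_image_of_mem _ (Finset.mem_product.2 ⟨h2.1, h1.2⟩),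
        Finset.mem_image_of_mem _ (Finset.mem_product.2 ⟨h1.1, h2.2⟩)⟩, ?_⟩
      simp only [inc, eTr]
      have := congrArg φ h3
      simpa only [val, map_add, map_mul] using this
    · rintro ⟨⟨a, b⟩, ⟨c, d⟩⟩ _ ⟨⟨a', b'⟩, ⟨c', d'⟩⟩ _ h
      simp only [Prod.mk.injEq] at h
      have h1 := eTr_inj φ h.1
      have h2 := eTr_inj φ h.2
      simp only [Prod.mk.injEq] at h1 h2
      rw [h1.1, h1.2, h2.1, h2.2]
  have hf : ∀ v ∈ V, ((Q.filter fun ab => val ab.1 = v).card) = ((S.filter fun a => val a = v).card) ^ 2 := by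
    intro v _
    rw [sq, ← Finset.card_product]
    congr 1
    ext ab
    simp only [hQ, Finset.mem_filter, Finset.mem_product]
    constructor
    · rintro ⟨⟨⟨h1, h2⟩, h3⟩, h4⟩; exact ⟨⟨h1, h4⟩, h2, h3 ▸ h4⟩
    · rintro ⟨⟨h1, h2⟩, h3, h4⟩; exact ⟨⟨⟨h1, h3⟩, h2.trans h4.symm⟩, h2⟩
  have s1 : S.card = ∑ v ∈ V, (S.filter fun a => val a = v).card :=
    Finset.card_eq_sum_card_fiberwise (fun a ha => (Finset.mem_filter.1 ha).2)
  have s2 : Q.card = ∑ v ∈ V, (Q.filter fun ab => val ab.1 = v).card :=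
    Finset.card_eq_sum_card_fiberwise (fun ab hab =>
      (Finset.mem_filter.1 (Finset.mem_product.1 (Finset.mem_filter.1 hab).1).1).2)
  have s3 : S.card ^ 2 ≤ V.card * Q.card := by
    rw [s2, Finset.sum_congr rfl hf, s1]
    exact sq_sum_le_card_mul_sum_sq
  have s4 : S.card ^ 2 ≤ V.card * einc I I := s3.trans (Nat.mul_le_mul_left _ hQI)
  exact_mod_cast s4

/-- Good parametrisation. -/
structure GoodP {F : Type*} [Field F] (A D : Finset F) (P : F → F → F × F) : Prop where
  inj : ∀ α ∈ A, ∀ s ∈ D, ∀ α' ∈ A, ∀ s' ∈ D, P α s = P α' s' → α = α' ∧ s = s'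
  col : ∀ α1 ∈ A, ∀ s1 ∈ D, ∀ α2 ∈ A, ∀ s2 ∈ D, P α1 s1 ≠ P α2 s2 →
    (∀ α ∈ A, ∀ s ∈ D, onl (P α1 s1) (P α2 s2) (P α s) → α = α1) ∨
    (∀ α ∈ A, ∀ s ∈ D, ∀ s' ∈ D, onl (P α1 s1) (P α2 s2) (P α s) → onl (P α1 s1) (P α2 s2) (P α s') → s = s')

theorem GoodP.mono {F : Type*} [Field F] {A D D' : Finset F} {P : F → F → F × F} (h : GoodP A D P) (hs : D' ⊆ D) :
    GoodP A D' P where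
  inj := fun α hα s hs1 α' hα' s' hs' => h.inj α hα s (hs hs1) α' hα' s' (hs hs')
  col := fun α1 h1 s1 hs1 α2 h2 s2 hs2 hne => by
    rcases h.col α1 h1 s1 (hs hs1) α2 h2 s2 (hs hs2) hne with h | h
    · left; exact fun α hα s hss => h α hα s (hs hss)
    · right; exact fun α hα s hss s' hs' => h α hα s (hs hss) s' (hs hs')

theorem GoodP.colP {F : Type*} [Field F] [DecidableEq F] {A D : Finset F} {P : F → F → F × F} (h : GoodP A D P) (k : ℕ)
    (hA : A.card ≤ k) (hD : D.card ≤ k) : ColP k ((A ×ˢ D).image fun z => P z.1 z.2) := by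
  classical
  intro x1 h1 x2 h2 hne
  rw [Finset.mem_image] at h1 h2
  obtain ⟨⟨α1, s1⟩, hx1, rfl⟩ := h1
  obtain ⟨⟨α2, s2⟩, hx2, rfl⟩ := h2
  rw [Finset.mem_product] at hx1 hx2
  rcases h.col α1 hx1.1 s1 hx1.2 α2 hx2.1 s2 hx2.2 hne with hh | hh
  · refine le_trans ?_ hD
    refine le_trans (Finset.card_le_card (t := D.image (fun s => P α1 s)) ?_) Finset.card_image_le
    intro y hy
    rw [Finset.mem_filter, Finset.mem_image] at hy
    obtain ⟨⟨⟨α, s⟩, hx, rfl⟩, hl⟩ := hy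
    rw [Finset.mem_product] at hx
    rw [Finset.mem_image]
    exact ⟨s, hx.2, by rw [hh α hx.1 s hx.2 hl]⟩
  · refine le_trans ?_ hA
    have : ∀ y : F × F, ∃ α : F, y ∈ ((A ×ˢ D).image fun z => P z.1 z.2) → α ∈ A ∧ ∃ s ∈ D, y = P α s := by
      intro y
      by_cases hy : y ∈ ((A ×ˢ D).image fun z => P z.1 z.2)
      · obtain ⟨⟨α, s⟩, hx, rfl⟩ := Finset.mem_image.1 hy
        rw [Finset.mem_product] at hx
        exact ⟨α, fun _ => ⟨hx.1, s, hx.2, rfl⟩⟩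
      · exact ⟨0, fun h => absurd h hy⟩
    choose i hi using this
    refine Finset.card_le_card_of_injOn i (fun y hy => (hi y (Finset.mem_filter.1 hy).1).1) ?_
    intro y hy y' hy' hii
    rw [Finset.mem_coe, Finset.mem_filter] at hy hy'
    obtain ⟨hα, s, hs, e⟩ := hi y hy.1
    obtain ⟨hα', s', hs', e'⟩ := hi y' hy'.1
    rw [← hii] at e'
    have l := hy.2
    have l' := hy'.2
    rw [e] at l
    rw [e'] at l'
    rw [e, e', hh _ hα s hs s' hs' l l']

theorem level_core (p : ℕ) [Fact p.Prime] (A D W V : Finset (ZMod p)) (P : ZMod p → ZMod p → ZMod p × ZMod p)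
    (hP : GoodP A D P) (τ : ℝ) (hτ : 0 < τ) (hA : 1 ≤ A.card)
    (hcount : ∀ α ∈ A, ∀ s ∈ D, τ ≤ ((W.filter fun w => (P α s).1 + (P α s).2 * w ∈ V).card : ℝ))
    (hN : (W.card : ℝ) * (A.card * D.card) ≤ (p : ℝ) ^ 2)
    (kW : (W.card : ℝ) ^ 2 ≤ W.card * (A.card * D.card))
    (kA : (A.card : ℝ) ^ 2 ≤ W.card * (A.card * D.card))
    (kD : (D.card : ℝ) ^ 2 ≤ W.card * (A.card * D.card)) :
    (A.card : ℝ) * D.card * τ ^ 4 ≤ 10003 ^ 2 * ((V.card : ℝ) ^ 2 * W.card ^ 3) := by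
  classical
  set L := (A ×ˢ D).image fun z => P z.1 z.2 with hL
  have injL : Set.InjOn (fun z : ZMod p × ZMod p => P z.1 z.2) (A ×ˢ D : Finset _) := by
    rintro ⟨α, s⟩ h1 ⟨α', s'⟩ h2 e
    rw [Finset.mem_coe, Finset.mem_product] at h1 h2
    obtain ⟨e1, e2⟩ := hP.inj α h1.1 s h1.2 α' h2.1 s' h2.2 e
    rw [e1, e2]
  have cL : L.card = A.card * D.card := by rw [hL, Finset.card_image_of_injOn injL, Finset.card_product]
  set k := max W.card (max A.card D.card) with hk
  have hk1 : 1 ≤ k := hA.trans ((le_max_left _ _).trans (le_max_right _ _))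
  have hkW : W.card ≤ k := le_max_left _ _
  have hkA : A.card ≤ k := (le_max_left _ _).trans (le_max_right _ _)
  have hkD : D.card ≤ k := (le_max_right _ _).trans (le_max_right _ _)
  have key := cart_energy p L W V k hk1 hkW (by rw [cL]; exact_mod_cast hN) (hP.colP k hkA hkD)
  have hS : τ * (A.card * D.card) ≤ (((W ×ˢ L).filter fun a => a.2.1 + a.2.2 * a.1 ∈ V).card : ℝ) := by
    rw [card_prod_filter' W L (fun w l => l.1 + l.2 * w ∈ V), hL, Finset.sum_image injL]
    push_cast
    have : τ * ((A.card : ℝ) * D.card) = ∑ z ∈ A ×ˢ D, τ := by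
      rw [Finset.sum_const, Finset.card_product]; simp; ring
    rw [this]
    refine Finset.sum_le_sum fun z hz => ?_
    rw [Finset.mem_product] at hz
    exact hcount z.1 hz.1 z.2 hz.2
  rw [cL] at key
  push_cast at key
  set ω : ℝ := (W.card : ℝ)
  set ν : ℝ := (V.card : ℝ)
  set n : ℝ := (A.card : ℝ) * D.card with hn
  have hn0 : 0 ≤ n := by positivity
  have hω0 : 0 ≤ ω := by positivity
  have hν0 : 0 ≤ ν := by positivity
  have hk2 : (k : ℝ) ≤ √(ω * n) := by
    apply Real.le_sqrt_of_sq_le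
    rcases max_choice W.card (max A.card D.card) with h | h
    · rw [hk, h]; exact kW
    · rw [hk, h]
      rcases max_choice A.card D.card with h | h
      · rw [h]; exact kA
      · rw [h]; exact kD
  set q := √(ω * n) with hq
  have hq2 : q ^ 2 = ω * n := Real.sq_sqrt (by positivity)
  have hq0 : 0 ≤ q := Real.sqrt_nonneg _
  have h1 : (τ * n) ^ 2 ≤ ν * (10003 * q ^ 3) := by
    refine le_trans (pow_le_pow_left₀ (by positivity) hS 2) (key.trans ?_)
    refine mul_le_mul_of_nonneg_left ?_ hν0
    rw [← hq2]
    nlinarith [mul_le_mul_of_nonneg_right hk2 (sq_nonneg q)]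
  have h2 : ((τ * n) ^ 2) ^ 2 ≤ (ν * (10003 * q ^ 3)) ^ 2 := pow_le_pow_left₀ (by positivity) h1 2
  have h3 : (ν * (10003 * q ^ 3)) ^ 2 = 10003 ^ 2 * (ν ^ 2 * ω ^ 3) * n ^ 3 := by
    have : q ^ 6 = (ω * n) ^ 3 := by rw [← hq2]; ring
    linear_combination ν ^ 2 * 10003 ^ 2 * this
  rw [h3] at h2
  rcases hn0.eq_or_lt with h0 | h0
  · rw [← h0]; simp; positivity
  · refine le_of_mul_le_mul_right (le_trans (le_of_eq ?_) h2) (pow_pos h0 3)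
    ring

theorem level_bound (p : ℕ) [Fact p.Prime] (A D W V : Finset (ZMod p)) (P : ZMod p → ZMod p → ZMod p × ZMod p)
    (hP : GoodP A D P) (τ : ℝ) (hτ : 0 < τ) (hA : 1 ≤ A.card)
    (hcount : ∀ α ∈ A, ∀ s ∈ D, τ ≤ ((W.filter fun w => (P α s).1 + (P α s).2 * w ∈ V).card : ℝ))
    (q : ℝ) (hDq : (D.card : ℝ) * τ ≤ q)
    (t1 : τ ≤ W.card) (t2 : τ ≤ V.card) (t3 : (A.card : ℝ) * τ ≤ V.card * W.card) (t4 : q ≤ (V.card : ℝ) * W.card)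
    (hN : 2 * 10003 ^ 2 * ((W.card : ℝ) * ((V.card : ℝ) ^ 2 * W.card ^ 3)) ≤ (p : ℝ) ^ 2 * τ ^ 4) :
    (A.card : ℝ) * D.card * τ ^ 4 ≤ 10003 ^ 2 * ((V.card : ℝ) ^ 2 * W.card ^ 3) := by
  by_contra hcon
  push Not at hcon
  set ω : ℝ := (W.card : ℝ) with hω
  set ν : ℝ := (V.card : ℝ) with hν
  set a : ℝ := (A.card : ℝ) with ha
  have ha1 : 1 ≤ a := by rw [ha]; exact_mod_cast hA
  have ha0 : 0 < a := by linarith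
  have hω0 : 0 < ω := by linarith
  have hν0 : 0 < ν := by linarith
  set M : ℝ := ν ^ 2 * ω ^ 3 with hM
  have hM0 : 0 < M := by positivity
  set R : ℝ := 10003 ^ 2 * M / (a * τ ^ 4) with hR
  have hRe : a * τ ^ 4 * R = 10003 ^ 2 * M := by rw [hR]; field_simp
  have hx0 : 0 < a * τ ^ 4 := by positivity
  have p3 : τ ^ 3 ≤ ν * ω * ω := by
    calc τ ^ 3 = τ * τ * τ := by ring
      _ ≤ ν * ω * ω := by gcongr
  have hx1 : a * τ ^ 4 ≤ M := by
    calc a * τ ^ 4 = (a * τ) * τ ^ 3 := by ring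
      _ ≤ (ν * ω) * (ν * ω * ω) := by gcongr
      _ = M := by rw [hM]; ring
  have hR1 : 1 ≤ R := by
    rw [hR, le_div_iff₀ hx0]; linarith
  have hdR : R < D.card := by
    rw [hR, div_lt_iff₀ hx0]; linarith
  have hfl : ⌊R⌋₊ + 1 ≤ D.card := by
    have : ⌊R⌋₊ < D.card := (Nat.floor_lt (by linarith)).2 hdR
    omega
  obtain ⟨D', hD', hc⟩ := Finset.exists_subset_card_eq hfl
  have d1 : R < D'.card := by rw [hc]; push_cast; exact Nat.lt_floor_add_one R
  have d2 : (D'.card : ℝ) ≤ 2 * R := by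
    rw [hc]; push_cast
    have := Nat.floor_le (show 0 ≤ R by linarith)
    linarith
  have d3 : (D'.card : ℝ) * τ ≤ q := by
    refine le_trans ?_ hDq
    have : (D'.card : ℝ) ≤ D.card := by exact_mod_cast Finset.card_le_card hD'
    gcongr
  set d : ℝ := (D'.card : ℝ) with hd
  have hd0 : 0 < d := by linarith
  -- a d τ^4 ≥ K M
  have big : 10003 ^ 2 * M < a * d * τ ^ 4 := by
    rw [← hRe]
    calc a * τ ^ 4 * R < a * τ ^ 4 * d := by gcongr
      _ = _ := by ring
  have big2 : a * d * τ ^ 4 ≤ 2 * 10003 ^ 2 * M := by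
    calc a * d * τ ^ 4 = a * τ ^ 4 * d := by ring
      _ ≤ a * τ ^ 4 * (2 * R) := by gcongr
      _ = _ := by linear_combination 2 * hRe
  have bigM : M < a * d * τ ^ 4 := by linarith
  have hτ4 : 0 < τ ^ 4 := by positivity
  refine absurd (level_core p A D' W V P (hP.mono hD') τ hτ hA (fun α hα s hs => hcount α hα s (hD' hs)) ?_ ?_ ?_ ?_)
    (not_le.2 big)
  · refine le_of_mul_le_mul_right (le_trans ?_ hN) hτ4
    calc ω * (a * d) * τ ^ 4 = ω * (a * d * τ ^ 4) := by ring
      _ ≤ ω * (2 * 10003 ^ 2 * M) := by gcongr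
      _ = _ := by ring
  · refine le_of_mul_le_mul_right ?_ hτ4
    calc ω ^ 2 * τ ^ 4 = ω ^ 2 * τ * τ ^ 3 := by ring
      _ ≤ ω ^ 2 * ν * (ν * ω * ω) := by gcongr
      _ = ω * M := by rw [hM]; ring
      _ ≤ ω * (a * d * τ ^ 4) := by gcongr
      _ = _ := by ring
  · refine le_of_mul_le_mul_right ?_ hτ4
    calc a ^ 2 * τ ^ 4 = (a * τ) * (a * τ) * τ * τ := by ring
      _ ≤ (ν * ω) * (ν * ω) * ω * ω := by gcongr
      _ = ω * M := by rw [hM]; ring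
      _ ≤ ω * (a * d * τ ^ 4) := by gcongr
      _ = _ := by ring
  · refine le_of_mul_le_mul_right ?_ hτ4
    have : d * τ ≤ ν * ω := d3.trans t4
    calc d ^ 2 * τ ^ 4 = (d * τ) * (d * τ) * τ * τ := by ring
      _ ≤ (ν * ω) * (ν * ω) * ω * ω := by gcongr
      _ = ω * M := by rw [hM]; ring
      _ ≤ ω * (a * d * τ ^ 4) := by gcongr
      _ = _ := by ring

theorem dyadic {ι : Type*} (X : Finset ι) (r : ι → ℝ) (hr : ∀ x ∈ X, 0 ≤ r x) (T B : ℝ) (hT : 0 < T)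
    (hB : ∀ τ, T ≤ τ → ((X.filter fun x => τ ≤ r x).card : ℝ) * τ ^ 4 ≤ B) (J : ℕ)
    (hJ : ∀ x ∈ X, r x < 2 ^ J * T) :
    ∑ x ∈ X, r x ^ 4 ≤ T ^ 3 * ∑ x ∈ X, r x + 16 * J * B := by
  classical
  induction J generalizing X with
  | zero =>
    simp only [pow_zero, one_mul] at hJ
    rw [Finset.mul_sum]
    simp only [Nat.cast_zero, mul_zero, zero_mul, add_zero]
    refine Finset.sum_le_sum fun x hx => ?_
    have h0 := hr x hx
    have h1 := (hJ x hx).le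
    calc r x ^ 4 = r x ^ 3 * r x := by ring
      _ ≤ T ^ 3 * r x := by gcongr
  | succ J ih =>
    have e := Finset.sum_filter_add_sum_filter_not X (fun x => r x < 2 ^ J * T) (fun x => r x ^ 4)
    rw [← e]
    have i1 := ih (X.filter fun x => r x < 2 ^ J * T) (fun x hx => hr x (Finset.mem_filter.1 hx).1)
      (by
        intro τ hτ
        refine le_trans ?_ (hB τ hτ)
        have : (((X.filter fun x => r x < 2 ^ J * T).filter fun x => τ ≤ r x).card : ℝ) ≤
          ((X.filter fun x => τ ≤ r x).card : ℝ) := by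
          exact_mod_cast Finset.card_le_card (Finset.filter_subset_filter _ (Finset.filter_subset _ _))
        have h0 : 0 ≤ τ := by linarith
        gcongr)
      (fun x hx => (Finset.mem_filter.1 hx).2)
    have i2 : ∑ x ∈ X.filter (fun x => r x < 2 ^ J * T), r x ≤ ∑ x ∈ X, r x :=
      Finset.sum_le_sum_of_subset_of_nonneg (Finset.filter_subset _ _) (fun x hx _ => hr x hx)
    have i3 : ∑ x ∈ X.filter (fun x => ¬ r x < 2 ^ J * T), r x ^ 4 ≤ 16 * B := by
      have h1 : T ≤ 2 ^ J * T := by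
        have : (1 : ℝ) ≤ 2 ^ J := one_le_pow₀ (by norm_num)
        nlinarith
      have h2 := hB (2 ^ J * T) h1
      calc ∑ x ∈ X.filter (fun x => ¬ r x < 2 ^ J * T), r x ^ 4
          ≤ ∑ x ∈ X.filter (fun x => ¬ r x < 2 ^ J * T), (2 ^ (J + 1) * T) ^ 4 := by
            refine Finset.sum_le_sum fun x hx => ?_
            have hx := (Finset.mem_filter.1 hx).1
            exact pow_le_pow_left₀ (hr x hx) (hJ x hx).le 4
        _ = ((X.filter fun x => 2 ^ J * T ≤ r x).card : ℝ) * (2 ^ (J + 1) * T) ^ 4 := by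
            rw [Finset.sum_const, nsmul_eq_mul]; simp only [not_lt]
        _ = 16 * (((X.filter fun x => 2 ^ J * T ≤ r x).card : ℝ) * (2 ^ J * T) ^ 4) := by ring
        _ ≤ 16 * B := by linarith
    have i4 : T ^ 3 * ∑ x ∈ X.filter (fun x => r x < 2 ^ J * T), r x ≤ T ^ 3 * ∑ x ∈ X, r x := by gcongr
    push_cast
    linarith

theorem sum_rDiv {p : ℕ} [NeZero p] (B C : Finset (ZMod p)) : ∑ x, rDiv B C x = B.card * C.card := by
  rw [← Finset.card_product]
  unfold rDiv
  exact (Finset.card_eq_sum_card_fiberwise (fun _ _ => Finset.mem_coe.2 (Finset.mem_univ _))).symm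

theorem final_arith (K m Z lg l2 J S : ℝ) (hK : 0 ≤ K) (hZ : 0 < Z) (hm : 1 ≤ m) (h1 : lg / l2 ≥ J) (h2 : 1 ≤ lg / l2)
    (hS : S ≤ 2 * K * Z) : S + 16 * J * (K * m * Z) ≤ 18 * K / l2 * m * Z * lg := by
  have e : 18 * K / l2 * m * Z * lg = 2 * K * Z * (m * (lg / l2)) + 16 * (K * m * Z) * (lg / l2) := by ring
  rw [e]
  have g1 : 1 ≤ m * (lg / l2) := one_le_mul_of_one_le_of_one_le hm h2
  have g2 : 2 * K * Z * 1 ≤ 2 * K * Z * (m * (lg / l2)) := by gcongr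
  have g3 : 16 * (K * m * Z) * J ≤ 16 * (K * m * Z) * (lg / l2) := by gcongr
  linarith

set_option maxHeartbeats 1000000 in
theorem main_case (p : ℕ) [Fact p.Prime] (A B Cs W V : Finset (ZMod p)) (P : ZMod p → ZMod p → ZMod p × ZMod p)
    (hP : GoodP A (Finset.univ.filter fun s => s ≠ 0) P) (hA : 1 ≤ A.card) (hB : 1 ≤ B.card) (hC : 1 ≤ Cs.card)
    (a : ℕ) (m : ℝ) (ha : 1 ≤ a) (hm : 1 ≤ m) (ham : (a : ℝ) ≤ m * A.card)
    (hcount : ∀ α ∈ A, ∀ s, s ≠ 0 → rDiv B Cs s ≤ (W.filter fun w => (P α s).1 + (P α s).2 * w ∈ V).card)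
    (r2 : ∀ s, s ≠ 0 → rDiv B Cs s ≤ V.card)
    (r3 : ∀ s, s ≠ 0 → A.card * rDiv B Cs s ≤ V.card * W.card)
    (t4 : B.card * Cs.card ≤ V.card * W.card)
    (hp : ((a : ℝ) * (B.card * Cs.card)) ^ 4 ≤ (p : ℝ) ^ 6 * (V.card : ℝ) ^ 2) :
    (E4mul B Cs : ℝ) ≤ 18 * 10003 ^ 2 / Real.log 2 * m * ((V.card : ℝ) ^ 2 * W.card ^ 3 / a) * Real.log (2 * a) := by
  classical
  obtain ⟨α0, hα0⟩ := Finset.card_pos.1 hA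
  have r1 : ∀ s, s ≠ 0 → rDiv B Cs s ≤ W.card := fun s hs =>
    (hcount α0 hα0 s hs).trans (Finset.card_le_card (Finset.filter_subset _ _))
  set X := Finset.univ.filter fun s : ZMod p => s ≠ 0 with hX
  have hE : (E4mul B Cs : ℝ) = ∑ x ∈ X, (rDiv B Cs x : ℝ) ^ 4 := by
    unfold E4mul; push_cast; rfl
  have hsum : ∑ x ∈ X, (rDiv B Cs x : ℝ) ≤ B.card * Cs.card := by
    have h1 : ∑ x ∈ X, rDiv B Cs x ≤ B.card * Cs.card := by
      rw [← sum_rDiv]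
      exact Finset.sum_le_sum_of_subset (Finset.subset_univ _)
    exact_mod_cast h1
  have hbc1 : 1 ≤ B.card * Cs.card := Nat.mul_pos hB hC
  set q : ℝ := (B.card : ℝ) * Cs.card with hq
  have hq1 : 1 ≤ q := by rw [hq]; exact_mod_cast hbc1
  have hq0 : 0 < q := by linarith
  have t4' : q ≤ (V.card : ℝ) * W.card := by rw [hq]; exact_mod_cast t4
  have r1' : ∀ s ∈ X, (rDiv B Cs s : ℝ) ≤ W.card := fun s hs => by exact_mod_cast r1 s (Finset.mem_filter.1 hs).2
  have r2' : ∀ s ∈ X, (rDiv B Cs s : ℝ) ≤ V.card := fun s hs => by exact_mod_cast r2 s (Finset.mem_filter.1 hs).2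
  have r3' : ∀ s ∈ X, (A.card : ℝ) * (rDiv B Cs s : ℝ) ≤ (V.card : ℝ) * W.card :=
    fun s hs => by exact_mod_cast r3 s (Finset.mem_filter.1 hs).2
  have hvw : 1 ≤ V.card * W.card := hbc1.trans t4
  have hω0 : 0 < (W.card : ℝ) := by exact_mod_cast Nat.pos_of_mul_pos_left hvw
  have hν0 : 0 < (V.card : ℝ) := by exact_mod_cast Nat.pos_of_mul_pos_right hvw
  have ha0 : 0 < (a : ℝ) := by exact_mod_cast ha
  have hA0 : 0 < (A.card : ℝ) := by exact_mod_cast hA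
  have hl : ∀ τ : ℝ, 0 < τ → 2 * 10003 ^ 2 * ((W.card : ℝ) * ((V.card : ℝ) ^ 2 * W.card ^ 3)) ≤ (p : ℝ) ^ 2 * τ ^ 4 →
      ((X.filter fun x => τ ≤ (rDiv B Cs x : ℝ)).card : ℝ) * τ ^ 4 ≤
        10003 ^ 2 * m * ((V.card : ℝ) ^ 2 * W.card ^ 3 / a) := by
    intro τ hτ hN
    set D := X.filter fun x => τ ≤ (rDiv B Cs x : ℝ) with hD
    rcases D.eq_empty_or_nonempty with h0 | ⟨s, hs⟩
    · rw [h0]; simp; positivity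
    have hsX : s ∈ X := (Finset.mem_filter.1 hs).1
    have hsτ : τ ≤ (rDiv B Cs s : ℝ) := (Finset.mem_filter.1 hs).2
    have hDq : (D.card : ℝ) * τ ≤ q := by
      refine le_trans ?_ hsum
      rw [← nsmul_eq_mul]
      refine (Finset.card_nsmul_le_sum D (fun x => (rDiv B Cs x : ℝ)) τ (fun x hx => (Finset.mem_filter.1 hx).2)).trans ?_
      exact Finset.sum_le_sum_of_subset_of_nonneg (Finset.filter_subset _ _) (fun _ _ _ => by positivity)
    have key := level_bound p A D W V P (hP.mono (Finset.filter_subset _ _)) τ hτ hA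
      (fun α hα s hs => by
        have h1 := Finset.mem_filter.1 hs
        refine h1.2.trans ?_
        exact_mod_cast hcount α hα s (Finset.mem_filter.1 h1.1).2) q hDq
      (hsτ.trans (r1' s hsX)) (hsτ.trans (r2' s hsX))
      ((mul_le_mul_of_nonneg_left hsτ hA0.le).trans (r3' s hsX)) t4' hN
    rw [← mul_div_assoc, le_div_iff₀ ha0]
    calc (D.card : ℝ) * τ ^ 4 * a ≤ (D.card : ℝ) * τ ^ 4 * (m * A.card) := by gcongr
      _ = m * ((A.card : ℝ) * D.card * τ ^ 4) := by ring
      _ ≤ m * (10003 ^ 2 * ((V.card : ℝ) ^ 2 * W.card ^ 3)) := by gcongr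
      _ = _ := by ring
  set ω : ℝ := (W.card : ℝ)
  set ν : ℝ := (V.card : ℝ)
  set M : ℝ := ν ^ 2 * ω ^ 3 with hM
  have hM0 : 0 < M := by positivity
  obtain ⟨T, hT0, hT⟩ : ∃ T : ℝ, 0 < T ∧ T ^ 3 = 2 * 10003 ^ 2 * M / (a * q) := by
    have hx : 0 < 2 * 10003 ^ 2 * M / (a * q) := by positivity
    refine ⟨(2 * 10003 ^ 2 * M / (a * q)) ^ ((1 : ℝ) / 3), by positivity, ?_⟩
    rw [← Real.rpow_natCast, ← Real.rpow_mul hx.le]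
    norm_num
  have hTe : T ^ 3 * (a * q) = 2 * 10003 ^ 2 * M := by rw [hT]; field_simp
  have hNT : 2 * 10003 ^ 2 * (ω * M) ≤ (p : ℝ) ^ 2 * T ^ 4 := by
    refine le_of_pow_le_pow_left₀ (n := 3) (by norm_num) (by positivity) ?_
    have hz : 0 < (a * q) ^ 4 := by positivity
    refine le_of_mul_le_mul_right ?_ hz
    have e1 : ((p : ℝ) ^ 2 * T ^ 4) ^ 3 * (a * q) ^ 4 = (p : ℝ) ^ 6 * (2 * 10003 ^ 2 * M) ^ 4 := by
      rw [← hTe]; ring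
    rw [e1]
    calc (2 * 10003 ^ 2 * (ω * M)) ^ 3 * (a * q) ^ 4 ≤ (2 * 10003 ^ 2 * (ω * M)) ^ 3 * ((p : ℝ) ^ 6 * ν ^ 2) := by gcongr
      _ = (2 * 10003 ^ 2) ^ 3 * ((p : ℝ) ^ 6 * M ^ 4) := by rw [hM]; ring
      _ ≤ (2 * 10003 ^ 2) ^ 4 * ((p : ℝ) ^ 6 * M ^ 4) := by gcongr <;> norm_num
      _ = _ := by ring
  set J := Nat.log 2 a + 1 with hJ
  have hJa : (a : ℝ) < 2 ^ J := by exact_mod_cast Nat.lt_pow_succ_log_self (by norm_num) a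
  have hlog2 : 0 < Real.log 2 := Real.log_pos (by norm_num)
  have hJl : (J : ℝ) * Real.log 2 ≤ Real.log (2 * a) := by
    rw [← Real.log_pow]
    apply Real.log_le_log (by positivity)
    have : 2 ^ Nat.log 2 a ≤ a := Nat.pow_log_le_self 2 (by omega)
    have h2 : 2 ^ J ≤ 2 * a := by rw [hJ, pow_succ]; omega
    exact_mod_cast h2
  have hl2 : Real.log 2 ≤ Real.log (2 * a) := by
    apply Real.log_le_log (by norm_num)
    have : (1 : ℝ) ≤ a := by exact_mod_cast ha
    linarith
  have dy := dyadic X (fun x => (rDiv B Cs x : ℝ)) (fun _ _ => by positivity) T (10003 ^ 2 * m * (M / a)) hT0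
    (by
      intro τ hτ
      refine hl τ (by linarith) (hNT.trans ?_)
      gcongr) J (by
      intro x hx
      refine lt_of_pow_lt_pow_left₀ 3 (by positivity) ?_
      refine lt_of_mul_lt_mul_right (a := q) ?_ hq0.le
      have x1 := r1' x hx
      have x2 := r2' x hx
      set r : ℝ := (rDiv B Cs x : ℝ)
      have hr0 : 0 ≤ r := by positivity
      calc r ^ 3 * q = r * r * r * q := by ring
        _ ≤ ν * ω * ω * (ν * ω) := by gcongr
        _ = M := by rw [hM]; ring
        _ ≤ 2 * 10003 ^ 2 * M := by linarith
        _ = T ^ 3 * (a * q) := hTe.symm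
        _ < T ^ 3 * ((2 ^ J) ^ 3 * q) := by
          have : (2 : ℝ) ^ J ≤ (2 ^ J) ^ 3 := by
            apply le_self_pow₀ (one_le_pow₀ (by norm_num)) (by norm_num)
          have h2 : (a : ℝ) < (2 ^ J) ^ 3 := lt_of_lt_of_le hJa this
          gcongr
        _ = _ := by ring)
  rw [hE]
  refine dy.trans ?_
  have f1 : T ^ 3 * ∑ x ∈ X, (rDiv B Cs x : ℝ) ≤ 2 * 10003 ^ 2 * (M / a) := by
    calc T ^ 3 * ∑ x ∈ X, (rDiv B Cs x : ℝ) ≤ T ^ 3 * q := by gcongr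
      _ = 2 * 10003 ^ 2 * (M / a) := by rw [hT]; field_simp
  have hMa : 0 < M / a := by positivity
  set Z := M / (a : ℝ)
  set lg := Real.log (2 * a)
  have hlg : lg / Real.log 2 ≥ J := by rw [ge_iff_le, le_div_iff₀ hlog2]; exact hJl
  have hlg1 : 1 ≤ lg / Real.log 2 := by rw [le_div_iff₀ hlog2]; linarith
  exact final_arith _ _ _ _ _ _ _ (by positivity) hMa hm hlg hlg1 f1

theorem rDiv_le_of {p : ℕ} [Fact p.Prime] (B C S : Finset (ZMod p)) (s : ZMod p) (hC : (0 : ZMod p) ∉ C) (i : ZMod p → ZMod p → ZMod p)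
    (h : ∀ b ∈ B, ∀ c ∈ C, b = s * c → i b c ∈ S)
    (hi : ∀ b ∈ B, ∀ c ∈ C, ∀ b' ∈ B, ∀ c' ∈ C, b = s * c → b' = s * c' → i b c = i b' c' → c = c') :
    rDiv B C s ≤ S.card := by
  unfold rDiv
  have key : ∀ bc ∈ ((B ×ˢ C).filter fun bc => bc.1 * bc.2⁻¹ = s), bc.1 ∈ B ∧ bc.2 ∈ C ∧ bc.1 = s * bc.2 := by
    intro bc hbc
    rw [Finset.mem_filter, Finset.mem_product] at hbc
    have h0 : bc.2 ≠ 0 := fun e => hC (e ▸ hbc.1.2)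
    refine ⟨hbc.1.1, hbc.1.2, ?_⟩
    rw [← hbc.2]; field_simp
  refine Finset.card_le_card_of_injOn (fun bc => i bc.1 bc.2) ?_ ?_
  · intro bc hbc
    obtain ⟨h1, h2, h3⟩ := key bc hbc
    exact h _ h1 _ h2 h3
  · intro bc hbc bc' hbc' e
    obtain ⟨h1, h2, h3⟩ := key bc hbc
    obtain ⟨h1', h2', h3'⟩ := key bc' hbc'
    have := hi _ h1 _ h2 _ h1' _ h2' h3 h3' e
    ext
    · rw [h3, h3', this]
    · exact this

theorem good1 {p : ℕ} [Fact p.Prime] (A : Finset (ZMod p)) (g h : ZMod p → ZMod p) (hg : ∀ x ∈ A, g x ≠ 0)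
    (hi : ∀ x ∈ A, ∀ y ∈ A, g x * h x = g y * h y → x = y) :
    GoodP A (Finset.univ.filter fun s => s ≠ 0) (fun x s => (g x * h x, g x * s)) where
  inj := by
    intro α hα s _ α' hα' s' _ e
    simp only [Prod.mk.injEq] at e
    have := hi α hα α' hα' e.1
    subst this
    exact ⟨rfl, mul_left_cancel₀ (hg α hα) e.2⟩
  col := by
    intro α1 h1 s1 _ α2 h2 s2 _ hne
    simp only [onl]
    by_cases hu : g α1 * h α1 = g α2 * h α2
    · left
      have := hi _ h1 _ h2 hu
      subst this
      intro α hα s _ e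
      apply hi _ hα _ h1
      have hv : g α1 * s2 - g α1 * s1 ≠ 0 := by
        intro h0
        apply hne
        rw [sub_eq_zero.1 h0]
      rw [sub_self, mul_zero] at e
      rcases mul_eq_zero.1 e with e | e
      · exact sub_eq_zero.1 e
      · exact absurd e hv
    · right
      intro α hα s _ s' _ e e'
      have hv : g α2 * h α2 - g α1 * h α1 ≠ 0 := fun h0 => hu (sub_eq_zero.1 h0).symm
      rw [e] at e'
      have := mul_right_cancel₀ hv e'
      exact mul_left_cancel₀ (hg α hα) (sub_left_inj.1 this)

theorem good2 {p : ℕ} [Fact p.Prime] (A : Finset (ZMod p)) (g h : ZMod p → ZMod p) (hg : ∀ x ∈ A, g x ≠ 0)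
    (hh : ∀ x ∈ A, h x ≠ 0)
    (hi : ∀ x ∈ A, ∀ y ∈ A, g x * h x = g y * h y → x = y) :
    GoodP A (Finset.univ.filter fun s => s ≠ 0) (fun x s => (-(h x * s⁻¹), (g x)⁻¹ * s⁻¹)) where
  inj := by
    intro α hα s hs α' hα' s' hs' e
    simp only [Prod.mk.injEq, neg_inj] at e
    have hs0 := (Finset.mem_filter.1 hs).2
    have hs0' := (Finset.mem_filter.1 hs').2
    have g0 := hg α hα
    have g0' := hg α' hα'
    have h0 := hh α hα
    obtain ⟨e1, e2⟩ := e
    have : α = α' := by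
      apply hi α hα α' hα'
      field_simp at e1 e2
      have h3 : (g α * h α - g α' * h α') * (s * s') = 0 := by linear_combination g α * s * e1 - h α' * s * e2
      rcases mul_eq_zero.1 h3 with h3 | h3
      · exact sub_eq_zero.1 h3
      · exact absurd h3 (mul_ne_zero hs0 hs0')
    subst this
    exact ⟨rfl, inv_injective (mul_left_cancel₀ h0 e1)⟩
  col := by
    intro α1 h1 s1 hs1 α2 h2 s2 hs2 hne
    have hs10 := inv_ne_zero (Finset.mem_filter.1 hs1).2
    have hs20 := inv_ne_zero (Finset.mem_filter.1 hs2).2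
    have g1 := hg α1 h1
    have g2 := hg α2 h2
    have k1 := mul_inv_cancel₀ g1
    have k2 := mul_inv_cancel₀ g2
    simp only [onl]
    by_cases hu : g α1 * h α1 = g α2 * h α2
    · left
      have := hi _ h1 _ h2 hu
      subst this
      intro α hα s hs e
      have hs0 := inv_ne_zero (Finset.mem_filter.1 hs).2
      have k := mul_inv_cancel₀ (hg α hα)
      apply hi _ hα _ h1
      have hv : s2⁻¹ - s1⁻¹ ≠ 0 := by
        intro h0
        apply hne
        rw [sub_eq_zero.1 h0]
      have : s⁻¹ * (s2⁻¹ - s1⁻¹) * (g α * h α - g α1 * h α1) = 0 := by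
        linear_combination (-g α * g α1) * e - g α * h α * s⁻¹ * (s2⁻¹ - s1⁻¹) * k1
          + g α1 * h α1 * s⁻¹ * (s2⁻¹ - s1⁻¹) * k
      rcases mul_eq_zero.1 this with h3 | h3
      · exact absurd h3 (mul_ne_zero hs0 hv)
      · exact sub_eq_zero.1 h3
    · right
      intro α hα s hs s' hs' e e'
      have hs0 := (Finset.mem_filter.1 hs).2
      have hs0' := (Finset.mem_filter.1 hs').2
      have q := mul_inv_cancel₀ hs0
      have q' := mul_inv_cancel₀ hs0'
      have hκ : s1⁻¹ * s2⁻¹ * (g α1 * h α1 - g α2 * h α2) ≠ 0 :=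
        mul_ne_zero (mul_ne_zero hs10 hs20) (sub_ne_zero.2 hu)
      have hκ2 : g α1 * g α2 * (-(h α1 * s1⁻¹) * ((g α2)⁻¹ * s2⁻¹) + ((g α1)⁻¹ * s1⁻¹) * (h α2 * s2⁻¹))
          = - (s1⁻¹ * s2⁻¹ * (g α1 * h α1 - g α2 * h α2)) := by
        linear_combination (-g α1 * h α1 * s1⁻¹ * s2⁻¹) * k2 + g α2 * h α2 * s1⁻¹ * s2⁻¹ * k1
      have hκ3 : -(h α1 * s1⁻¹) * ((g α2)⁻¹ * s2⁻¹) + ((g α1)⁻¹ * s1⁻¹) * (h α2 * s2⁻¹) ≠ 0 := by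
        intro h0
        rw [h0, mul_zero] at hκ2
        exact hκ (neg_eq_zero.1 hκ2.symm)
      refine mul_left_cancel₀ hκ3 ?_
      linear_combination s' * e' - s * e
        + (h α * ((g α2)⁻¹ * s2⁻¹ - (g α1)⁻¹ * s1⁻¹) + (g α)⁻¹ * (-(h α2 * s2⁻¹) - -(h α1 * s1⁻¹))) * (q' - q)

theorem exists_inj_subset {p : ℕ} [Fact p.Prime] (A : Finset (ZMod p)) (g : ZMod p → ZMod p) (hA0 : (0 : ZMod p) ∉ A)
    (hg : ∀ x ∈ A, g x ≠ 0) :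
    ∃ A' ⊆ A, (∀ x ∈ A', ∀ y ∈ A', g x = g y → x = y) ∧ A.card ≤ mu g * A'.card := by
  classical
  have : ∀ t : ZMod p, ∃ x, t ∈ A.image g → x ∈ A ∧ g x = t := by
    intro t
    by_cases ht : t ∈ A.image g
    · obtain ⟨x, hx, e⟩ := Finset.mem_image.1 ht
      exact ⟨x, fun _ => ⟨hx, e⟩⟩
    · exact ⟨0, fun h => absurd h ht⟩
  choose sec hsec using this
  refine ⟨(A.image g).image sec, ?_, ?_, ?_⟩
  · intro x hx
    obtain ⟨t, ht, rfl⟩ := Finset.mem_image.1 hx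
    exact (hsec t ht).1
  · intro x hx y hy e
    obtain ⟨t, ht, rfl⟩ := Finset.mem_image.1 hx
    obtain ⟨t', ht', rfl⟩ := Finset.mem_image.1 hy
    rw [(hsec t ht).2, (hsec t' ht').2] at e
    rw [e]
  · rw [Finset.card_image_of_injOn (s := A.image g) (f := sec) (by
      intro t ht t' ht' e
      rw [← (hsec t ht).2, ← (hsec t' ht').2, e])]
    refine Finset.card_le_mul_card_image A (mu g) fun t ht => ?_
    obtain ⟨x, hx, e⟩ := Finset.mem_image.1 ht
    have ht0 : t ≠ 0 := e ▸ hg x hx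
    refine le_trans ?_ (Finset.le_sup (f := fun t => (Finset.univ.filter fun x : ZMod p => x ≠ 0 ∧ g x = t).card)
      (Finset.mem_filter.2 ⟨Finset.mem_univ t, ht0⟩))
    apply Finset.card_le_card
    intro y hy
    rw [Finset.mem_filter] at hy
    exact Finset.mem_filter.2 ⟨Finset.mem_univ _, fun e => hA0 (e ▸ hy.1), hy.2⟩

theorem fourth_multiplicative_energy_bound :
    ∃ C > (0:ℝ),
      ∀ (p : ℕ) [Fact p.Prime], p ≠ 2 →
      ∀ g h : ZMod p → ZMod p,
      (∀ x : ZMod p, x ≠ 0 → g x ≠ 0) → (∀ x : ZMod p, x ≠ 0 → h x ≠ 0) →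
      ∀ A B Cs : Finset (ZMod p),
      A.Nonempty → B.Nonempty → Cs.Nonempty →
      (0:ZMod p) ∉ A → (0:ZMod p) ∉ B → (0:ZMod p) ∉ Cs →
      A.card ≤ B.card →
      (A.card : ℝ) ≤ (p:ℝ) ^ ((3:ℝ)/5) →
      (B.card : ℝ) ≤ (p:ℝ) ^ ((3:ℝ)/5) →
      (Cs.card : ℝ) ≤ (p:ℝ) ^ ((3:ℝ)/5) →
      (E4mul B Cs : ℝ) ≤
        C * ((mu (fun x => g x * h x) : ℕ) : ℝ) ^ 4 *
          min (((Finset.image₂ (fun x y => g x * (h x + y)) A B).card : ℝ) ^ 3 * (Cs.card : ℝ) ^ 2 / (A.card : ℝ))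
              (((Finset.image₂ (fun x y => g x * (h x + y)) A B).card : ℝ) ^ 2 * (Cs.card : ℝ) ^ 3 / (A.card : ℝ)) *
          Real.log (2 * (A.card : ℝ)) := by
  classical
  have hlog2 : 0 < Real.log 2 := Real.log_pos (by norm_num)
  refine ⟨18 * 10003 ^ 2 / Real.log 2, by positivity, ?_⟩
  intro p _ _ g h hg hh A B Cs nA nB nC zA zB zC hAB pA pB pC
  have hgA : ∀ x ∈ A, g x ≠ 0 := fun x hx => hg x (fun e => zA (e ▸ hx))
  have hhA : ∀ x ∈ A, h x ≠ 0 := fun x hx => hh x (fun e => zA (e ▸ hx))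
  obtain ⟨A', sA, iA, mA'⟩ := exists_inj_subset A (fun x => g x * h x) zA (fun x hx => mul_ne_zero (hgA x hx) (hhA x hx))
  set m := mu (fun x => g x * h x) with hm
  set V := Finset.image₂ (fun x y => g x * (h x + y)) A B with hV
  have a1 : 1 ≤ A.card := nA.card_pos
  have b1 : 1 ≤ B.card := nB.card_pos
  have c1 : 1 ≤ Cs.card := nC.card_pos
  have hma : 0 < m * A'.card := lt_of_lt_of_le a1 mA'
  have m1 : 1 ≤ m := Nat.pos_of_mul_pos_right hma
  have a1' : 1 ≤ A'.card := Nat.pos_of_mul_pos_left hma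
  have m1' : (1 : ℝ) ≤ m := by exact_mod_cast m1
  have mA'' : (A.card : ℝ) ≤ (m : ℝ) * A'.card := by exact_mod_cast mA'
  have hBV : B.card ≤ V.card := by
    obtain ⟨x, hx⟩ := nA
    refine Finset.card_le_card_of_injOn (fun y => g x * (h x + y)) (fun y hy => Finset.mem_image₂_of_mem hx hy) ?_
    intro y _ y' _ e
    exact add_left_cancel (mul_left_cancel₀ (hgA x hx) e)
  have hA'V : A'.card ≤ V.card := ((Finset.card_le_card sA).trans hAB).trans hBV
  have rB : ∀ s, s ≠ 0 → rDiv B Cs s ≤ B.card := fun s hs =>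
    rDiv_le_of B Cs B s zC (fun b _ => b) (fun b hb _ _ _ => hb)
      (fun b _ c _ b' _ c' _ e e' i => mul_left_cancel₀ hs (by rw [← e, ← e']; exact i))
  have rC : ∀ s, s ≠ 0 → rDiv B Cs s ≤ Cs.card := fun s _ =>
    rDiv_le_of B Cs Cs s zC (fun _ c => c) (fun _ _ c hc _ => hc)
      (fun b _ c _ b' _ c' _ e e' i => i)
  have hBV' : (B.card : ℝ) ≤ V.card := by exact_mod_cast hBV
  have hx10 : ((p : ℝ) ^ ((3 : ℝ) / 5)) ^ 10 = (p : ℝ) ^ 6 := by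
    rw [← Real.rpow_natCast, ← Real.rpow_mul (by positivity), ← Real.rpow_natCast]
    norm_num
  have case1 := main_case p A' B Cs Cs V (fun x s => (g x * h x, g x * s))
    (good1 A' g h (fun x hx => hgA x (sA hx)) iA) a1' b1 c1 A.card m a1 m1' mA''
    (by
      intro α hα s hs
      refine rDiv_le_of B Cs _ s zC (fun _ c => c) (fun b hb c hc e => ?_) (fun b _ c _ b' _ c' _ e e' i => i)
      refine Finset.mem_filter.2 ⟨hc, ?_⟩
      have : g α * h α + g α * s * c = g α * (h α + b) := by rw [e]; ring
      simp only [this]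
      exact Finset.mem_image₂_of_mem (sA hα) hb)
    (fun s hs => (rB s hs).trans hBV)
    (fun s hs => Nat.mul_le_mul hA'V (rC s hs))
    (Nat.mul_le_mul_right _ hBV)
    (by
      rw [← hx10]
      generalize (p : ℝ) ^ ((3 : ℝ) / 5) = x at *
      calc ((A.card : ℝ) * (B.card * Cs.card)) ^ 4
          = (A.card : ℝ) ^ 4 * B.card ^ 2 * Cs.card ^ 4 * B.card ^ 2 := by ring
        _ ≤ x ^ 4 * x ^ 2 * x ^ 4 * (V.card : ℝ) ^ 2 := by gcongr
        _ = _ := by ring)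
  have case2 := main_case p A' B Cs V Cs (fun x s => (-(h x * s⁻¹), (g x)⁻¹ * s⁻¹))
    (good2 A' g h (fun x hx => hgA x (sA hx)) (fun x hx => hhA x (sA hx)) iA) a1' b1 c1 A.card m a1 m1' mA''
    (by
      intro α hα s hs
      have g0 := hgA α (sA hα)
      refine rDiv_le_of B Cs _ s zC (fun b _ => g α * (h α + b)) (fun b hb c hc e => ?_)
        (fun b _ c _ b' _ c' _ e e' i => ?_)
      · refine Finset.mem_filter.2 ⟨Finset.mem_image₂_of_mem (sA hα) hb, ?_⟩
        have : -(h α * s⁻¹) + (g α)⁻¹ * s⁻¹ * (g α * (h α + b)) = c := by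
          rw [e]; field_simp; ring
        simp only [this]
        exact hc
      · have := add_left_cancel (mul_left_cancel₀ g0 i)
        exact mul_left_cancel₀ hs (by rw [← e, ← e']; exact this))
    (fun s hs => rC s hs)
    (fun s hs => by rw [mul_comm Cs.card]; exact Nat.mul_le_mul hA'V (rC s hs))
    (by rw [mul_comm Cs.card]; exact Nat.mul_le_mul_right _ hBV)
    (by
      rw [← hx10]
      generalize (p : ℝ) ^ ((3 : ℝ) / 5) = x at *
      calc ((A.card : ℝ) * (B.card * Cs.card)) ^ 4
          = (A.card : ℝ) ^ 4 * B.card ^ 4 * Cs.card ^ 2 * Cs.card ^ 2 := by ring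
        _ ≤ x ^ 4 * x ^ 4 * x ^ 2 * (Cs.card : ℝ) ^ 2 := by gcongr
        _ = _ := by ring)
  have hm4 : (m : ℝ) ≤ (m : ℝ) ^ 4 := le_self_pow₀ m1' (by norm_num)
  have hlg : 0 ≤ Real.log (2 * (A.card : ℝ)) := by
    apply Real.log_nonneg
    have : (1 : ℝ) ≤ A.card := by exact_mod_cast a1
    linarith
  have fin : ∀ Y : ℝ, 0 ≤ Y →
      18 * 10003 ^ 2 / Real.log 2 * m * Y * Real.log (2 * (A.card : ℝ)) ≤
      18 * 10003 ^ 2 / Real.log 2 * (m : ℝ) ^ 4 * Y * Real.log (2 * (A.card : ℝ)) := by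
    intro Y hY
    have hk : 0 ≤ 18 * 10003 ^ 2 / Real.log 2 := by positivity
    gcongr
  rcases min_choice ((V.card : ℝ) ^ 3 * (Cs.card : ℝ) ^ 2 / (A.card : ℝ))
    ((V.card : ℝ) ^ 2 * (Cs.card : ℝ) ^ 3 / (A.card : ℝ)) with e | e
  · rw [e]
    rw [mul_comm ((Cs.card : ℝ) ^ 2)] at case2
    exact case2.trans (fin _ (by positivity))
  · rw [e]
    exact case1.trans (fin _ (by positivity))
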